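/- arXiv:2508.17470 — 5 statements merged into one kernel-verified Lean document; each statement's English description precedes it below -/
import Mathlib

section
/- Let 0 ≤ α < n, let 1 < p < n/α (with the convention n/0 = ∞, so 1 < p < ∞ when α = 0), and let 1/q = 1/p − α/n. Then there exists a constant C > 0 such that ‖M_α b‖_{ℓ^q(ℤ^n)} ≤ C ‖b‖_{ℓ^p(ℤ^n)} for all b ∈ ℓ^p(ℤ^n). -/
open scoped ENNReal BigOperators Classical

noncomputable def eucZ {n : ℕ} (v : Fin n → ℤ) : ℝ :=
  Real.sqrt (∑ k, ((v k : ℝ)) ^ 2)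

noncomputable def eucR {n : ℕ} (v : Fin n → ℝ) : ℝ :=
  Real.sqrt (∑ k, (v k) ^ 2)

noncomputable def lpNorm {n : ℕ} (p : ℝ) (b : (Fin n → ℤ) → ℝ) : ℝ≥0∞ :=
  (∑' i : Fin n → ℤ, ENNReal.ofReal |b i| ^ p) ^ (1 / p)

noncomputable def Tfs {n m : ℕ} (al : Fin m → ℝ) (A : Fin m → Matrix (Fin n) (Fin n) ℤ)
    (b : (Fin n → ℤ) → ℝ) (j : Fin n → ℤ) : ℝ≥0∞ :=
  ∑' i : Fin n → ℤ,
    if ∀ k, i ≠ (A k).mulVec j then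
      ENNReal.ofReal (|b i| / ∏ k, eucZ (i - (A k).mulVec j) ^ (al k))
    else 0

noncomputable def Mfr {n : ℕ} (γ : ℝ) (b : (Fin n → ℤ) → ℝ) (j : Fin n → ℤ) : ℝ≥0∞ :=
  ⨆ N : ℕ, ENNReal.ofReal ((2 * (N : ℝ) + 1) ^ (γ - (n : ℝ)) *
    ∑ i ∈ Finset.Icc (fun k => j k - (N : ℤ)) (fun k => j k + (N : ℤ)), |b i|)

noncomputable def Iop {n : ℕ} (α : ℝ) (b : (Fin n → ℤ) → ℝ) (j : Fin n → ℤ) : ℝ≥0∞ :=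
  ∑' i : Fin n → ℤ, if i ≠ j then ENNReal.ofReal (|b i| / eucZ (i - j) ^ ((n : ℝ) - α)) else 0

def IsPAtom {n : ℕ} (p : ℝ) (d : ℕ) (a : (Fin n → ℤ) → ℝ) (i0 : Fin n → ℤ) (N : ℕ) : Prop :=
  (∀ i : Fin n → ℤ, a i ≠ 0 → ∀ t, |i t - i0 t| ≤ (N : ℤ)) ∧
  (∀ i : Fin n → ℤ, |a i| ≤ ((2 * (N : ℝ) + 1) ^ n) ^ (-(1 / p))) ∧
  (∀ β : Fin n → ℕ, (∑ t, β t) ≤ d →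
    ∑ i ∈ Finset.Icc (fun t => i0 t - (N : ℤ)) (fun t => i0 t + (N : ℤ)),
      (∏ t, ((i t : ℝ)) ^ (β t)) * a i = 0)


lemma weak_fin {n : ℕ} (b : (Fin n → ℤ) → ℝ) (t : ℝ) (ht : 0 < t) (K : Finset (Fin n → ℤ))
    (N : (Fin n → ℤ) → ℕ)
    (hN : ∀ j ∈ K, t * (2 * (N j : ℝ) + 1) ^ n <
      ∑ i ∈ Finset.Icc (fun k => j k - (N j : ℤ)) (fun k => j k + (N j : ℤ)), |b i|) :
    ∃ U : Finset (Fin n → ℤ), (K.card : ℝ) ≤ 2 * 3 ^ n / t * 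
      ∑ i ∈ U, if t < 2 * |b i| then |b i| else 0 := by
  have hcard : ∀ (j : Fin n → ℤ) (m : ℕ),
      ((Finset.Icc (fun k => j k - (m : ℤ)) (fun k => j k + (m : ℤ))).card : ℝ)
        = (2 * (m:ℝ) + 1) ^ n := by
    intro j m
    rw [Pi.card_Icc]
    simp only [Int.card_Icc]
    have : ∀ k, (j k + (m:ℤ) + 1 - (j k - m)).toNat = 2 * m + 1 := fun k => by omega
    simp [this]
  set Q : (Fin n → ℤ) → Finset (Fin n → ℤ) := fun j =>
    Finset.Icc (fun k => j k - (N j : ℤ)) (fun k => j k + (N j : ℤ)) with hQ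
  set h : (Fin n → ℤ) → ℝ := fun i => if t < 2 * |b i| then |b i| else 0 with hh
  have hh0 : ∀ i, 0 ≤ h i := fun i => by simp only [hh]; split_ifs <;> positivity
  have key : ∀ j ∈ K, t / 2 * (2 * (N j : ℝ) + 1) ^ n ≤ ∑ i ∈ Q j, h i := by
    intro j hj
    have h1 := hN j hj
    have h2 : ∑ i ∈ Q j, |b i| ≤ ∑ i ∈ Q j, (h i + t / 2) := by
      apply Finset.sum_le_sum
      intro i _
      simp only [hh]; split_ifs <;> linarith
    rw [Finset.sum_add_distrib, Finset.sum_const, nsmul_eq_mul, hcard] at h2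
    linarith
  obtain ⟨u, huK, hdis, hcov⟩ := Vitali.exists_disjoint_subfamily_covering_enlargement
    (fun j => (Q j : Set (Fin n → ℤ))) (K : Set (Fin n → ℤ)) (fun j => (N j : ℝ)) 2 one_lt_two
    (fun _ _ => Nat.cast_nonneg _) (∑ j ∈ K, (N j : ℝ))
    (fun j hj => Finset.single_le_sum (f := fun j => (N j : ℝ)) (fun _ _ => Nat.cast_nonneg _) hj)
    (fun j _ => ⟨j, by simp only [hQ, Finset.coe_Icc, Set.mem_Icc]; constructor <;> intro k <;> simp⟩)
  have hufin : u.Finite := K.finite_toSet.subset huK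
  lift u to Finset (Fin n → ℤ) using hufin
  refine ⟨u.biUnion Q, ?_⟩
  have hsub : K ⊆ u.biUnion (fun c => Finset.Icc (fun k => c k - ((3 * N c : ℕ) : ℤ))
      (fun k => c k + ((3 * N c : ℕ) : ℤ))) := by
    intro a ha
    obtain ⟨c, hc, ⟨x, hxa, hxc⟩, hle⟩ := hcov a ha
    rw [Finset.mem_biUnion]
    refine ⟨c, hc, ?_⟩
    have hle' : N a ≤ 2 * N c := by exact_mod_cast hle
    simp only [hQ, Finset.coe_Icc, Set.mem_Icc, Pi.le_def] at hxa hxc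
    simp only [Finset.mem_Icc, Pi.le_def]
    constructor <;> intro k
    · have := hxa.1 k; have := hxa.2 k; have := hxc.1 k; have := hxc.2 k; push_cast; omega
    · have := hxa.1 k; have := hxa.2 k; have := hxc.1 k; have := hxc.2 k; push_cast; omega
  have c1 : (K.card : ℝ) ≤ ∑ c ∈ u, (2 * ((3 * N c : ℕ) : ℝ) + 1) ^ n := by
    have := (Finset.card_le_card hsub).trans Finset.card_biUnion_le
    have h2 : (K.card : ℝ) ≤ ((∑ c ∈ u, (Finset.Icc (fun k => c k - ((3 * N c : ℕ) : ℤ))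
      (fun k => c k + ((3 * N c : ℕ) : ℤ))).card : ℕ) : ℝ) := Nat.cast_le.2 this
    rw [Nat.cast_sum] at h2
    refine h2.trans (le_of_eq (Finset.sum_congr rfl fun c _ => hcard c (3 * N c)))
  rw [Finset.sum_biUnion (by intro x hx y hy hxy; exact Finset.disjoint_coe.1 (hdis hx hy hxy)), Finset.mul_sum]
  refine c1.trans (Finset.sum_le_sum fun c hc => ?_)
  have k1 := key c (huK hc)
  calc (2 * ((3 * N c : ℕ) : ℝ) + 1) ^ n ≤ (3 * (2 * (N c : ℝ) + 1)) ^ n := by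
        apply pow_le_pow_left₀ (by positivity); push_cast; linarith
    _ = 2 * 3 ^ n / t * (t / 2 * (2 * (N c : ℝ) + 1) ^ n) := by rw [mul_pow]; field_simp
    _ ≤ _ := by gcongr

lemma weak {n : ℕ} (b : (Fin n → ℤ) → ℝ) (t : ℝ) (ht : 0 < t) :
    (MeasureTheory.Measure.count : MeasureTheory.Measure (Fin n → ℤ))
      {j | ENNReal.ofReal t < Mfr 0 b j} ≤ ENNReal.ofReal (2 * 3 ^ n / t) * 
      ((MeasureTheory.Measure.count : MeasureTheory.Measure (Fin n → ℤ)).withDensity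
        (fun i => ENNReal.ofReal |b i|)) {i | t < 2 * |b i|} := by
  have hN : ∀ j : Fin n → ℤ, ∃ N : ℕ, ENNReal.ofReal t < Mfr 0 b j → 
      t * (2 * (N : ℝ) + 1) ^ n <
      ∑ i ∈ Finset.Icc (fun k => j k - (N : ℤ)) (fun k => j k + (N : ℤ)), |b i| := by
    intro j
    by_cases hj : ENNReal.ofReal t < Mfr 0 b j
    · rw [Mfr, lt_iSup_iff] at hj
      obtain ⟨N, hN⟩ := hj
      refine ⟨N, fun _ => ?_⟩
      have := (ENNReal.ofReal_lt_ofReal_iff').1 hN |>.1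
      rw [zero_sub, Real.rpow_neg (by positivity), Real.rpow_natCast, inv_mul_eq_div,
        lt_div_iff₀ (by positivity)] at this
      exact this
    · exact ⟨0, fun h => absurd h hj⟩
  choose N hN using hN
  have hR : ((MeasureTheory.Measure.count : MeasureTheory.Measure (Fin n → ℤ)).withDensity
        (fun i => ENNReal.ofReal |b i|)) {i | t < 2 * |b i|} = 
        ∑' i, ENNReal.ofReal (if t < 2 * |b i| then |b i| else 0) := by
    rw [MeasureTheory.withDensity_apply _ (Set.to_countable _).measurableSet,
      ← MeasureTheory.lintegral_indicator (Set.to_countable _).measurableSet,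
      MeasureTheory.lintegral_count]
    congr 1; ext i
    simp only [Set.indicator, Set.mem_ofPred_eq]
    split_ifs <;> simp
  rw [hR, ← MeasureTheory.lintegral_indicator_one (Set.to_countable _).measurableSet,
      MeasureTheory.lintegral_count, ENNReal.tsum_eq_iSup_sum]
  refine iSup_le fun K' => ?_
  set K := K'.filter (fun j => ENNReal.ofReal t < Mfr 0 b j) with hK
  obtain ⟨U, hU⟩ := weak_fin b t ht K N (fun j hj => hN j (Finset.mem_filter.1 hj).2)
  have e : ∑ a ∈ K', ({j | ENNReal.ofReal t < Mfr 0 b j} : Set (Fin n → ℤ)).indicator 1 a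
      = ENNReal.ofReal (K.card : ℝ) := by
    simp [Set.indicator, hK]
  rw [e]
  refine (ENNReal.ofReal_le_ofReal hU).trans ?_
  rw [ENNReal.ofReal_mul (by positivity), ENNReal.ofReal_sum_of_nonneg
    (fun i _ => by split_ifs <;> positivity)]
  gcongr
  exact ENNReal.sum_le_tsum U

lemma avg_rpow {n : ℕ} (b : (Fin n → ℤ) → ℝ) (p θ : ℝ) (hp : 1 < p) (hθ : 0 ≤ θ)
    (j : Fin n → ℤ) (N : ℕ) :
    ENNReal.ofReal ((2 * (N : ℝ) + 1) ^ (n * θ - (n : ℝ)) *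
    ∑ i ∈ Finset.Icc (fun k => j k - (N : ℤ)) (fun k => j k + (N : ℤ)), |b i|) ≤
    (∑' i : Fin n → ℤ, ENNReal.ofReal |b i| ^ p) ^ θ *
    ENNReal.ofReal ((2 * (N : ℝ) + 1) ^ (0 - (n : ℝ)) *
    ∑ i ∈ Finset.Icc (fun k => j k - (N : ℤ)) (fun k => j k + (N : ℤ)), |b i|) ^ (1 - p * θ) := by
  have hcard : 
      ((Finset.Icc (fun k => j k - (N : ℤ)) (fun k => j k + (N : ℤ))).card : ℝ)
        = (2 * (N:ℝ) + 1) ^ n := by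
    rw [Pi.card_Icc]
    simp only [Int.card_Icc]
    have : ∀ k, (j k + (N:ℤ) + 1 - (j k - N)).toNat = 2 * N + 1 := fun k => by omega
    simp [this]
  set Q := Finset.Icc (fun k => j k - (N : ℤ)) (fun k => j k + (N : ℤ)) with hQ
  set S := ∑ i ∈ Q, |b i| with hS
  set T := ∑ i ∈ Q, |b i| ^ p with hT
  set V := (2 * (N:ℝ) + 1) ^ n with hV
  have hV0 : 0 < V := by positivity
  have hS0 : 0 ≤ S := Finset.sum_nonneg fun _ _ => abs_nonneg _
  have hT0 : 0 ≤ T := Finset.sum_nonneg fun _ _ => Real.rpow_nonneg (abs_nonneg _) _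
  have e1 : (2 * (N : ℝ) + 1) ^ (n * θ - (n : ℝ)) = V ^ (θ - 1) := by
    rw [hV, ← Real.rpow_natCast, ← Real.rpow_mul (by positivity)]; congr 1; ring
  have e2 : (2 * (N : ℝ) + 1) ^ (0 - (n : ℝ)) = V ^ (-1 : ℝ) := by
    rw [hV, ← Real.rpow_natCast, ← Real.rpow_mul (by positivity)]; congr 1; ring
  rw [e1, e2]
  rcases hS0.eq_or_lt with h0 | hSpos
  · rw [← h0]; simp
  have hj : S ^ p ≤ V ^ (p - 1) * T := by
    have := Real.rpow_sum_le_const_mul_sum_rpow Q b hp.le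
    rwa [hcard] at this
  have hTT : ENNReal.ofReal T ≤ ∑' i : Fin n → ℤ, ENNReal.ofReal |b i| ^ p := by
    rw [hT, ENNReal.ofReal_sum_of_nonneg fun _ _ => Real.rpow_nonneg (abs_nonneg _) _]
    refine le_trans (le_of_eq ?_) (ENNReal.sum_le_tsum Q)
    refine Finset.sum_congr rfl fun i _ => ?_
    rw [ENNReal.ofReal_rpow_of_nonneg (abs_nonneg _) (by linarith)]
  have hreal : V ^ (θ - 1) * S ≤ T ^ θ * (V ^ (-1 : ℝ) * S) ^ (1 - p * θ) := by
    have h1 : S ^ (p * θ) ≤ V ^ ((p - 1) * θ) * T ^ θ := by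
      rw [Real.rpow_mul hS0, Real.rpow_mul hV0.le, ← Real.mul_rpow (by positivity) hT0]
      exact Real.rpow_le_rpow (by positivity) hj hθ
    have h2 : S = S ^ (p * θ) * S ^ (1 - p * θ) := by
      rw [← Real.rpow_add hSpos]; simp
    calc V ^ (θ - 1) * S = V ^ (θ - 1) * (S ^ (p * θ) * S ^ (1 - p * θ)) := by rw [← h2]
      _ ≤ V ^ (θ - 1) * ((V ^ ((p - 1) * θ) * T ^ θ) * S ^ (1 - p * θ)) := by gcongr
      _ = T ^ θ * ((V ^ (θ - 1) * V ^ ((p - 1) * θ)) * S ^ (1 - p * θ)) := by ring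
      _ = _ := by
        rw [Real.mul_rpow (by positivity) hS0, ← Real.rpow_add hV0, ← Real.rpow_mul hV0.le]
        congr 3; ring
  refine (ENNReal.ofReal_le_ofReal hreal).trans ?_
  rw [ENNReal.ofReal_mul (by positivity), ENNReal.ofReal_rpow_of_pos (by positivity),
    ← ENNReal.ofReal_rpow_of_nonneg hT0 hθ]
  gcongr

lemma Mfr_zero_lt_top {n : ℕ} (b : (Fin n → ℤ) → ℝ) (p : ℝ) (hp : 1 < p)
    (hT : (∑' i : Fin n → ℤ, ENNReal.ofReal |b i| ^ p) ≠ ⊤) (j : Fin n → ℤ) :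
    Mfr 0 b j ≠ ⊤ := by
  have hp0 : 0 < p := by linarith
  have hle : Mfr 0 b j ≤ (∑' i : Fin n → ℤ, ENNReal.ofReal |b i| ^ p) ^ (1 / p) := by
    refine iSup_le fun N => ?_
    have h := avg_rpow b p (1 / p) hp (by positivity) j N
    rw [mul_one_div_cancel hp0.ne', sub_self, ENNReal.rpow_zero, mul_one] at h
    refine le_trans (ENNReal.ofReal_le_ofReal ?_) h
    gcongr
    · linarith [(Nat.cast_nonneg N : (0:ℝ) ≤ N)]
    · positivity
  exact ne_top_of_le_ne_top (ENNReal.rpow_ne_top_of_nonneg (by positivity) hT) hle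

lemma maximal {n : ℕ} (b : (Fin n → ℤ) → ℝ) (p : ℝ) (hp : 1 < p)
    (hT : (∑' i : Fin n → ℤ, ENNReal.ofReal |b i| ^ p) ≠ ⊤) :
    ∑' j, (Mfr 0 b j) ^ p ≤
      (ENNReal.ofReal p * ENNReal.ofReal (2 * 3 ^ n) * ENNReal.ofReal ((p - 1)⁻¹ * 2 ^ (p - 1))) *
      ∑' i : Fin n → ℤ, ENNReal.ofReal |b i| ^ p := by
  have hp0 : 0 < p := by linarith
  have hp1 : 0 < p - 1 := by linarith
  have hM := Mfr_zero_lt_top b p hp hT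
  set μ := ((MeasureTheory.Measure.count : MeasureTheory.Measure (Fin n → ℤ)).withDensity
        (fun i => ENNReal.ofReal |b i|)) with hμ
  have L1 := MeasureTheory.lintegral_rpow_eq_lintegral_meas_lt_mul
    (MeasureTheory.Measure.count : MeasureTheory.Measure (Fin n → ℤ))
    (f := fun j => (Mfr 0 b j).toReal) (Filter.Eventually.of_forall fun _ => ENNReal.toReal_nonneg)
    (measurable_of_countable _).aemeasurable hp0
  have L2 := MeasureTheory.lintegral_rpow_eq_lintegral_meas_lt_mul μ
    (f := fun i => 2 * |b i|) (Filter.Eventually.of_forall fun _ => by positivity)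
    (measurable_of_countable _).aemeasurable hp1
  have R1 : ∑' j, (Mfr 0 b j) ^ p = ∫⁻ ω : Fin n → ℤ, ENNReal.ofReal ((Mfr 0 b ω).toReal ^ p)
      ∂MeasureTheory.Measure.count := by
    rw [MeasureTheory.lintegral_count]
    congr 1; ext j
    rw [← ENNReal.ofReal_rpow_of_nonneg ENNReal.toReal_nonneg hp0.le, ENNReal.ofReal_toReal (hM j)]
  have R2 : ∫⁻ ω : Fin n → ℤ, ENNReal.ofReal ((2 * |b ω|) ^ (p - 1)) ∂μ =
      ENNReal.ofReal (2 ^ (p - 1)) * ∑' i : Fin n → ℤ, ENNReal.ofReal |b i| ^ p := by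
    rw [hμ, MeasureTheory.lintegral_withDensity_eq_lintegral_mul _ (measurable_of_countable _)
      (measurable_of_countable _), MeasureTheory.lintegral_count, ← ENNReal.tsum_mul_left]
    congr 1; ext i
    rw [Pi.mul_apply, ENNReal.ofReal_rpow_of_nonneg (abs_nonneg _) hp0.le,
      ← ENNReal.ofReal_mul (abs_nonneg _), ← ENNReal.ofReal_mul (by positivity),
      Real.mul_rpow (by norm_num) (abs_nonneg _)]
    congr 1
    have : |b i| ^ p = |b i| ^ (p - 1) * |b i| := by
      rcases (abs_nonneg (b i)).eq_or_lt with h | h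
      · rw [← h]; simp [hp0.ne']
      · rw [← Real.rpow_add_one h.ne']; simp
    rw [this]; ring
  have I : ∫⁻ t in Set.Ioi (0:ℝ), (MeasureTheory.Measure.count : MeasureTheory.Measure (Fin n → ℤ))
        {a | t < (Mfr 0 b a).toReal} * ENNReal.ofReal (t ^ (p - 1)) ≤
      ENNReal.ofReal (2 * 3 ^ n) *
      ∫⁻ t in Set.Ioi (0:ℝ), μ {a | t < 2 * |b a|} * ENNReal.ofReal (t ^ (p - 1 - 1)) := by
    rw [← MeasureTheory.lintegral_const_mul' _ _ ENNReal.ofReal_ne_top]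
    refine MeasureTheory.setLIntegral_mono' measurableSet_Ioi fun t ht => ?_
    have ht : 0 < t := ht
    have hw := weak b t ht
    have hs : {a | t < (Mfr 0 b a).toReal} = {j | ENNReal.ofReal t < Mfr 0 b j} := by
      ext a
      simp only [Set.mem_ofPred_eq]
      rw [ENNReal.ofReal_lt_iff_lt_toReal ht.le (hM a)]
    rw [hs]
    calc _ ≤ ENNReal.ofReal (2 * 3 ^ n / t) * μ {i | t < 2 * |b i|} * ENNReal.ofReal (t ^ (p - 1)) := by
          gcongr
      _ = (ENNReal.ofReal (2 * 3 ^ n / t) * ENNReal.ofReal (t ^ (p - 1))) * μ {i | t < 2 * |b i|} := by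
          ring
      _ = (ENNReal.ofReal (2 * 3 ^ n) * ENNReal.ofReal (t ^ (p - 1 - 1))) * μ {i | t < 2 * |b i|} := by
          rw [← ENNReal.ofReal_mul (by positivity), ← ENNReal.ofReal_mul (by positivity),
            Real.rpow_sub_one ht.ne' (p - 1)]
          congr 2; ring
      _ = _ := by ring
  have L3 : ∫⁻ t in Set.Ioi (0:ℝ), μ {a | t < 2 * |b a|} * ENNReal.ofReal (t ^ (p - 1 - 1)) =
      ENNReal.ofReal ((p - 1)⁻¹ * 2 ^ (p - 1)) * ∑' i : Fin n → ℤ, ENNReal.ofReal |b i| ^ p := by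
    rw [ENNReal.ofReal_mul (by positivity), mul_assoc, ← R2, L2, ← mul_assoc,
      ← ENNReal.ofReal_mul (by positivity), inv_mul_cancel₀ hp1.ne', ENNReal.ofReal_one, one_mul]
  rw [R1, L1, mul_assoc, mul_assoc, ← L3]
  gcongr

theorem stmt1 (n : ℕ) (hn : 1 ≤ n) (α : ℝ) (hα0 : 0 ≤ α) (hαn : α < n)
    (p q : ℝ) (hp : 1 < p) (hpn : α * p < n) (hq : 1 / q = 1 / p - α / n) :
    ∃ C : ℝ, 0 < C ∧ ∀ b : (Fin n → ℤ) → ℝ,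
      (∑' j : Fin n → ℤ, (Mfr α b j) ^ q) ^ (1 / q) ≤ ENNReal.ofReal C * lpNorm p b := by
  have hn0 : (0:ℝ) < n := by exact_mod_cast hn
  have hp0 : 0 < p := by linarith
  have hq0 : 0 < q := by
    have : 0 < 1 / q := by
      rw [hq, sub_pos, div_lt_div_iff₀ hn0 hp0]; linarith
    exact one_div_pos.1 this
  set θ := α / n with hθ
  have hθ0 : 0 ≤ θ := by positivity
  have hαθ : α = n * θ := by rw [hθ]; field_simp
  have hpq : (1 - p * θ) * q = p := by
    have : θ = 1 / p - 1 / q := by linarith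
    rw [this]; field_simp; ring
  have hr0 : 0 < 1 - p * θ := by
    by_contra h
    nlinarith
  set D := (ENNReal.ofReal p * ENNReal.ofReal (2 * 3 ^ n) *
    ENNReal.ofReal ((p - 1)⁻¹ * 2 ^ (p - 1))) with hD
  have hDt : D ≠ ⊤ := ENNReal.mul_ne_top (ENNReal.mul_ne_top ENNReal.ofReal_ne_top
    ENNReal.ofReal_ne_top) ENNReal.ofReal_ne_top
  have hDq : D ^ (1 / q) ≠ ⊤ := ENNReal.rpow_ne_top_of_nonneg (by positivity) hDt
  have hC0 : 0 < (D ^ (1 / q)).toReal + 1 := by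
    have := ENNReal.toReal_nonneg (a := D ^ (1 / q)); linarith
  refine ⟨(D ^ (1 / q)).toReal + 1, hC0, fun b => ?_⟩
  rw [lpNorm]
  set T := ∑' i : Fin n → ℤ, ENNReal.ofReal |b i| ^ p with hT
  by_cases hTt : T = ⊤
  · rw [hTt, ENNReal.top_rpow_of_pos (by positivity), ENNReal.mul_top
      (by simpa using hC0)]
    exact le_top
  have hDC : D ^ (1 / q) ≤ ENNReal.ofReal ((D ^ (1 / q)).toReal + 1) := by
    rw [← ENNReal.ofReal_toReal hDq, ENNReal.toReal_ofReal ENNReal.toReal_nonneg]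
    exact ENNReal.ofReal_le_ofReal (by linarith)
  have hed : ∀ j, Mfr α b j ≤ T ^ θ * (Mfr 0 b j) ^ (1 - p * θ) := by
    intro j
    refine iSup_le fun N => ?_
    have h := avg_rpow b p θ hp hθ0 j N
    rw [← hαθ] at h
    refine h.trans ?_
    gcongr
    exact le_iSup (fun N : ℕ => ENNReal.ofReal ((2 * (N : ℝ) + 1) ^ ((0:ℝ) - (n : ℝ)) *
      ∑ i ∈ Finset.Icc (fun k => j k - (N : ℤ)) (fun k => j k + (N : ℤ)), |b i|)) N
  have hsum : ∑' j : Fin n → ℤ, (Mfr α b j) ^ q ≤ T ^ (θ * q) * (D * T) := by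
    calc _ ≤ ∑' j : Fin n → ℤ, T ^ (θ * q) * (Mfr 0 b j) ^ p := by
          refine ENNReal.tsum_le_tsum fun j => ?_
          refine (ENNReal.rpow_le_rpow (hed j) hq0.le).trans (le_of_eq ?_)
          rw [ENNReal.mul_rpow_of_nonneg _ _ hq0.le, ← ENNReal.rpow_mul, ← ENNReal.rpow_mul, hpq]
      _ = T ^ (θ * q) * ∑' j : Fin n → ℤ, (Mfr 0 b j) ^ p := ENNReal.tsum_mul_left
      _ ≤ _ := by
          gcongr
          exact maximal b p hp hTt
  have hi : 0 ≤ 1 / q := by positivity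
  calc _ ≤ (T ^ (θ * q) * (D * T)) ^ (1 / q) := ENNReal.rpow_le_rpow hsum hi
    _ = D ^ (1 / q) * (T ^ θ * T ^ (1 / q)) := by
        rw [ENNReal.mul_rpow_of_nonneg _ _ hi, ENNReal.mul_rpow_of_nonneg _ _ hi,
          ← ENNReal.rpow_mul, mul_assoc θ, mul_one_div_cancel hq0.ne', mul_one]
        ring
    _ = D ^ (1 / q) * T ^ (1 / p) := by
        rw [← ENNReal.rpow_add_of_nonneg _ _ hθ0 hi, hq]
        congr 2; ring
    _ ≤ _ := by gcongr
end

section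
/- Let 0 ≤ α < n and m ∈ ℕ with m > 1 − α/n, and let T_{α,m} be the discrete fractional series operator. If 1 < p < n/α (with n/0 = ∞) and 1/q = 1/p − α/n, then there exists a constant C > 0 such that ‖T_{α,m} b‖_{ℓ^q(ℤ^n)} ≤ C ‖b‖_{ℓ^p(ℤ^n)} for all b ∈ ℓ^p(ℤ^n). -/
open scoped ENNReal BigOperators Classical

lemma fs_count {n : ℕ} (L : Finset (Fin n → ℤ)) (ρ : ℝ) (hρ : 0 ≤ ρ)
    (h : ∀ l ∈ L, 1 + ‖l‖ ≤ ρ) : (L.card : ℝ) ≤ (2 * ρ) ^ n := by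
  rcases L.eq_empty_or_nonempty with rfl | ⟨l0, hl0⟩
  · simp; positivity
  have h1 : 1 ≤ ρ := by have := h l0 hl0; have := norm_nonneg l0; linarith
  set N : ℕ := ⌊ρ - 1⌋₊ with hN
  have hNle : (N : ℝ) ≤ ρ - 1 := Nat.floor_le (by linarith)
  have hsub : L ⊆ Fintype.piFinset (fun _ : Fin n => Finset.Icc (-(N : ℤ)) N) := by
    intro l hl
    rw [Fintype.mem_piFinset]
    intro t
    have h2 : ‖l t‖ ≤ ρ - 1 := (norm_le_pi_norm l t).trans (by have := h l hl; linarith)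
    have h3 : (l t).natAbs ≤ N := by
      apply Nat.le_floor
      rw [Int.norm_eq_abs] at h2
      rw [Nat.cast_natAbs]; push_cast; exact h2
    rw [Finset.mem_Icc]; omega
  have hc := Finset.card_le_card hsub
  rw [Fintype.card_piFinset] at hc
  simp only [Int.card_Icc, Finset.prod_const, Finset.card_univ, Fintype.card_fin] at hc
  have : ((N : ℤ) + 1 - -(N : ℤ)).toNat = 2 * N + 1 := by omega
  rw [this] at hc
  calc (L.card : ℝ) ≤ ((2 * N + 1 : ℕ) : ℝ) ^ n := by exact_mod_cast hc
    _ ≤ (2 * ρ) ^ n := by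
      apply pow_le_pow_left₀ (by positivity)
      push_cast; linarith

lemma fs_shell {n : ℕ} (L : Finset (Fin n → ℤ)) (k : (Fin n → ℤ) → ℕ) (R y u : ℝ)
    (hR : 0 < R) (hy : 0 < y) (hu : 0 ≤ u) (hyu : y ^ ((n : ℝ) - u) < 1)
    (h1 : ∀ l ∈ L, R * y ^ (k l) / 2 ≤ 1 + ‖l‖) (h2 : ∀ l ∈ L, 1 + ‖l‖ ≤ 2 * (R * y ^ (k l))) :
    ∑ l ∈ L, (1 + ‖l‖) ^ (-u) ≤
      4 ^ n * 2 ^ u * (1 - y ^ ((n : ℝ) - u))⁻¹ * R ^ ((n : ℝ) - u) := by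
  set x := y ^ ((n : ℝ) - u) with hx
  have hx0 : 0 ≤ x := by positivity
  have key : ∀ t, ∑ l ∈ L with k l = t, (1 + ‖l‖) ^ (-u) ≤
      (4 ^ n * 2 ^ u * R ^ ((n : ℝ) - u)) * x ^ t := by
    intro t
    have hρ : 0 < R * y ^ t := by positivity
    have hc := fs_count (L.filter (fun l => k l = t)) (2 * (R * y ^ t)) (by positivity) (by
      intro l hl
      rw [Finset.mem_filter] at hl
      have := h2 l hl.1
      rwa [hl.2] at this)
    have hb : ∀ l ∈ L.filter (fun l => k l = t), (1 + ‖l‖) ^ (-u) ≤ (R * y ^ t / 2) ^ (-u) := by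
      intro l hl
      rw [Finset.mem_filter] at hl
      have := h1 l hl.1
      rw [hl.2] at this
      exact Real.rpow_le_rpow_of_nonpos (by positivity) this (by linarith)
    calc _ ≤ ((L.filter (fun l => k l = t)).card : ℝ) * (R * y ^ t / 2) ^ (-u) := by
          rw [← nsmul_eq_mul]; exact Finset.sum_le_card_nsmul _ _ _ hb
      _ ≤ (2 * (2 * (R * y ^ t))) ^ n * (R * y ^ t / 2) ^ (-u) := by gcongr
      _ = 4 ^ n * 2 ^ u * ((R * y ^ t) ^ n * (R * y ^ t) ^ (-u)) := by
          rw [Real.div_rpow hρ.le (by norm_num), Real.rpow_neg (by norm_num : (0:ℝ) ≤ 2),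
            ← mul_assoc, mul_pow]
          norm_num; ring
      _ = 4 ^ n * 2 ^ u * (R * y ^ t) ^ ((n : ℝ) - u) := by
          rw [sub_eq_add_neg, Real.rpow_add hρ, Real.rpow_natCast]
      _ = _ := by
          rw [Real.mul_rpow hR.le (by positivity), hx, ← Real.rpow_natCast y t,
            ← Real.rpow_natCast (y ^ _) t, ← Real.rpow_mul hy.le, ← Real.rpow_mul hy.le,
            mul_comm (t : ℝ)]
          ring
  calc _ = ∑ t ∈ L.image k, ∑ l ∈ L with k l = t, (1 + ‖l‖) ^ (-u) := by
        rw [Finset.sum_fiberwise_of_maps_to]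
        intro l hl; exact Finset.mem_image_of_mem _ hl
    _ ≤ ∑ t ∈ L.image k, (4 ^ n * 2 ^ u * R ^ ((n : ℝ) - u)) * x ^ t :=
        Finset.sum_le_sum fun t _ => key t
    _ = (4 ^ n * 2 ^ u * R ^ ((n : ℝ) - u)) * ∑ t ∈ L.image k, x ^ t := by rw [Finset.mul_sum]
    _ ≤ (4 ^ n * 2 ^ u * R ^ ((n : ℝ) - u)) * (1 - x)⁻¹ := by
        gcongr
        rw [← tsum_geometric_of_lt_one hx0 hyu]
        exact (summable_geometric_of_lt_one hx0 hyu).sum_le_tsum _ (fun _ _ => by positivity)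
    _ = _ := by ring

lemma fs_near {n : ℕ} (u : ℝ) (hu : 0 ≤ u) (hun : u < n) : ∃ C : ℝ, 0 < C ∧
    ∀ (L : Finset (Fin n → ℤ)) (R : ℝ), 0 < R → (∀ l ∈ L, 1 + ‖l‖ ≤ R) →
      ∑ l ∈ L, (1 + ‖l‖) ^ (-u) ≤ C * R ^ ((n : ℝ) - u) := by
  have hy : (1 / 2 : ℝ) ^ ((n : ℝ) - u) < 1 :=
    Real.rpow_lt_one (by norm_num) (by norm_num) (by linarith)
  refine ⟨4 ^ n * 2 ^ u * (1 - (1 / 2 : ℝ) ^ ((n : ℝ) - u))⁻¹, ?_, ?_⟩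
  · have : 0 < 1 - (1 / 2 : ℝ) ^ ((n : ℝ) - u) := by linarith
    positivity
  intro L R hR hL
  have hk : ∀ l : Fin n → ℤ, ∃ k : ℕ, l ∈ L → (2 : ℝ) ^ k ≤ R / (1 + ‖l‖) ∧
      R / (1 + ‖l‖) < 2 ^ (k + 1) := by
    intro l
    by_cases hl : l ∈ L
    · have h0 : 0 < 1 + ‖l‖ := by positivity
      obtain ⟨k, hk⟩ := exists_nat_pow_near (x := R / (1 + ‖l‖)) (y := 2)
        (by rw [le_div_iff₀ h0]; linarith [hL l hl]) (by norm_num)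
      exact ⟨k, fun _ => hk⟩
    · exact ⟨0, fun h => absurd h hl⟩
  choose k hk using hk
  refine fs_shell L k R (1 / 2) u hR (by norm_num) hu hy ?_ ?_
  · intro l hl
    have h0 : 0 < 1 + ‖l‖ := by positivity
    have := (hk l hl).2
    rw [div_lt_iff₀ h0, pow_succ] at this
    rw [one_div, inv_pow, ← div_eq_mul_inv, div_div, div_le_iff₀ (by positivity)]
    linarith
  · intro l hl
    have h0 : 0 < 1 + ‖l‖ := by positivity
    have := (hk l hl).1
    rw [le_div_iff₀ h0] at this
    have h3 : 1 + ‖l‖ ≤ R * (1 / 2) ^ k l := by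
      rw [one_div, inv_pow, ← div_eq_mul_inv, le_div_iff₀ (by positivity)]
      linarith
    have : 0 ≤ R * (1 / 2) ^ k l := by positivity
    linarith

lemma fs_far {n : ℕ} (u : ℝ) (hun : n < u) : ∃ C : ℝ, 0 < C ∧
    ∀ (L : Finset (Fin n → ℤ)) (R : ℝ), 0 < R → (∀ l ∈ L, R ≤ 1 + ‖l‖) →
      ∑ l ∈ L, (1 + ‖l‖) ^ (-u) ≤ C * R ^ ((n : ℝ) - u) := by
  have hu : 0 ≤ u := by have : (0 : ℝ) ≤ n := by positivity
                        linarith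
  have hy : (2 : ℝ) ^ ((n : ℝ) - u) < 1 :=
    Real.rpow_lt_one_of_one_lt_of_neg (by norm_num) (by linarith)
  refine ⟨4 ^ n * 2 ^ u * (1 - (2 : ℝ) ^ ((n : ℝ) - u))⁻¹, ?_, ?_⟩
  · have : 0 < 1 - (2 : ℝ) ^ ((n : ℝ) - u) := by linarith
    positivity
  intro L R hR hL
  have hk : ∀ l : Fin n → ℤ, ∃ k : ℕ, l ∈ L → (2 : ℝ) ^ k ≤ (1 + ‖l‖) / R ∧
      (1 + ‖l‖) / R < 2 ^ (k + 1) := by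
    intro l
    by_cases hl : l ∈ L
    · obtain ⟨k, hk⟩ := exists_nat_pow_near (x := (1 + ‖l‖) / R) (y := 2)
        (by rw [le_div_iff₀ hR]; linarith [hL l hl]) (by norm_num)
      exact ⟨k, fun _ => hk⟩
    · exact ⟨0, fun h => absurd h hl⟩
  choose k hk using hk
  refine fs_shell L k R 2 u hR (by norm_num) hu hy ?_ ?_
  · intro l hl
    have := (hk l hl).1
    rw [le_div_iff₀ hR] at this
    have : 0 ≤ R * 2 ^ k l := by positivity
    linarith
  · intro l hl
    have := (hk l hl).2
    rw [div_lt_iff₀ hR, pow_succ] at this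
    linarith

lemma fs_two {n : ℕ} (u v : ℝ) (hu : 0 ≤ u) (hv : 0 ≤ v) (hun : u < n) (huv : n < u + v) :
    ∃ C : ℝ, 0 < C ∧ ∀ (L : Finset (Fin n → ℤ)) (R : ℝ), 1 ≤ R →
      ∑ l ∈ L, (1 + ‖l‖) ^ (-u) * (‖l‖ + R) ^ (-v) ≤ C * R ^ ((n : ℝ) - u - v) := by
  obtain ⟨C1, hC1, h1⟩ := fs_near (n := n) u hu hun
  obtain ⟨C2, hC2, h2⟩ := fs_far (n := n) (u + v) huv
  refine ⟨C1 + C2, by positivity, ?_⟩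
  intro L R hR
  have hR0 : 0 < R := by linarith
  rw [← Finset.sum_filter_add_sum_filter_not L (fun l => 1 + ‖l‖ ≤ R), add_mul]
  apply add_le_add
  · calc _ ≤ ∑ l ∈ L with 1 + ‖l‖ ≤ R, (1 + ‖l‖) ^ (-u) * R ^ (-v) := by
          refine Finset.sum_le_sum fun l _ => ?_
          have : (‖l‖ + R) ^ (-v) ≤ R ^ (-v) :=
            Real.rpow_le_rpow_of_nonpos hR0 (by have := norm_nonneg l; linarith) (by linarith)
          gcongr
      _ = (∑ l ∈ L with 1 + ‖l‖ ≤ R, (1 + ‖l‖) ^ (-u)) * R ^ (-v) := by rw [Finset.sum_mul]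
      _ ≤ (C1 * R ^ ((n : ℝ) - u)) * R ^ (-v) := by
          gcongr
          exact h1 _ R hR0 (fun l hl => (Finset.mem_filter.1 hl).2)
      _ = _ := by rw [mul_assoc, ← Real.rpow_add hR0]; ring_nf
  · calc _ ≤ ∑ l ∈ L with ¬ (1 + ‖l‖ ≤ R), (1 + ‖l‖) ^ (-(u + v)) := by
          refine Finset.sum_le_sum fun l _ => ?_
          have hl : 0 < 1 + ‖l‖ := by positivity
          have : (‖l‖ + R) ^ (-v) ≤ (1 + ‖l‖) ^ (-v) :=
            Real.rpow_le_rpow_of_nonpos hl (by linarith) (by linarith)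
          rw [neg_add, Real.rpow_add hl]
          gcongr
      _ ≤ C2 * R ^ ((n : ℝ) - (u + v)) :=
          h2 _ R hR0 (fun l hl => (not_le.1 (Finset.mem_filter.1 hl).2).le)
      _ = _ := by ring_nf

/-- the symmetric model kernel for `α = 0` -/
noncomputable def fsS {n : ℕ} (a : ℝ) (i j : Fin n → ℤ) : ℝ :=
  (1 + ‖i - j‖) ^ (-a) * (1 + ‖i‖ + ‖j‖) ^ (-((n : ℝ) - a))

lemma fsS_nonneg {n : ℕ} (a : ℝ) (i j : Fin n → ℤ) : 0 ≤ fsS a i j := by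
  unfold fsS; positivity

lemma fsS_symm {n : ℕ} (a : ℝ) (i j : Fin n → ℤ) : fsS a i j = fsS a j i := by
  unfold fsS; rw [norm_sub_rev, add_right_comm]

lemma fs_schur {n : ℕ} (a t : ℝ) (ha : 0 ≤ a) (ht : 0 < t) (hat : a + t < n) :
    ∃ C : ℝ, 0 < C ∧ ∀ (I : Finset (Fin n → ℤ)) (j : Fin n → ℤ),
      ∑ i ∈ I, fsS a i j * (1 + ‖i‖) ^ (-t) ≤ C * (1 + ‖j‖) ^ (-t) := by
  obtain ⟨C, hC, h⟩ := fs_two (n := n) (a + t) (n - a) (by linarith) (by linarith) hat (by linarith)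
  set v : ℝ := n - a with hv
  have hv0 : 0 < v := by linarith
  refine ⟨2 ^ v * C + C, by positivity, ?_⟩
  intro I j
  have hpt : ∀ i : Fin n → ℤ, fsS a i j * (1 + ‖i‖) ^ (-t) ≤
      2 ^ v * ((1 + ‖i - j‖) ^ (-(a + t)) * (‖i - j‖ + (1 + ‖j‖)) ^ (-v)) +
      (1 + ‖i‖) ^ (-(a + t)) * (‖i‖ + (1 + ‖j‖)) ^ (-v) := by
    intro i
    have h0 : 0 < 1 + ‖i‖ := by positivity
    have h1 : 0 < 1 + ‖i - j‖ := by positivity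
    have hw : (1 + ‖i‖ + ‖j‖) ^ (-v) ≤ 2 ^ v * (‖i - j‖ + (1 + ‖j‖)) ^ (-v) := by
      have e : (2 : ℝ) ^ v * (‖i - j‖ + (1 + ‖j‖)) ^ (-v) =
          ((‖i - j‖ + (1 + ‖j‖)) / 2) ^ (-v) := by
        rw [Real.div_rpow (by positivity) (by norm_num), Real.rpow_neg (by norm_num : (0:ℝ) ≤ 2),
          div_inv_eq_mul, mul_comm]
      rw [e]
      apply Real.rpow_le_rpow_of_nonpos (by positivity) _ (by linarith)
      have := norm_sub_le i j
      have := norm_nonneg i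
      linarith
    have hadd : ∀ x : ℝ, 0 < x → x ^ (-(a + t)) = x ^ (-a) * x ^ (-t) := by
      intro x hx; rw [neg_add, Real.rpow_add hx]
    unfold fsS
    rw [← hv]
    rcases le_total ‖i‖ ‖i - j‖ with hc | hc
    · have h3 : (1 + ‖i - j‖) ^ (-a) ≤ (1 + ‖i‖) ^ (-a) :=
        Real.rpow_le_rpow_of_nonpos h0 (by linarith) (by linarith)
      have e : ‖i‖ + (1 + ‖j‖) = 1 + ‖i‖ + ‖j‖ := by ring
      have p1 : 0 ≤ 2 ^ v * ((1 + ‖i - j‖) ^ (-(a + t)) * (‖i - j‖ + (1 + ‖j‖)) ^ (-v)) := by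
        positivity
      calc _ ≤ (1 + ‖i‖) ^ (-a) * (1 + ‖i‖ + ‖j‖) ^ (-v) * (1 + ‖i‖) ^ (-t) := by gcongr
        _ = (1 + ‖i‖) ^ (-(a + t)) * (‖i‖ + (1 + ‖j‖)) ^ (-v) := by
          rw [hadd _ h0, e]; ring
        _ ≤ _ := by linarith
    · have h3 : (1 + ‖i‖) ^ (-t) ≤ (1 + ‖i - j‖) ^ (-t) :=
        Real.rpow_le_rpow_of_nonpos h1 (by linarith) (by linarith)
      have p1 : 0 ≤ (1 + ‖i‖) ^ (-(a + t)) * (‖i‖ + (1 + ‖j‖)) ^ (-v) := by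
        positivity
      calc _ ≤ (1 + ‖i - j‖) ^ (-a) * (2 ^ v * (‖i - j‖ + (1 + ‖j‖)) ^ (-v)) *
            (1 + ‖i - j‖) ^ (-t) := by gcongr
        _ = 2 ^ v * ((1 + ‖i - j‖) ^ (-(a + t)) * (‖i - j‖ + (1 + ‖j‖)) ^ (-v)) := by
          rw [hadd _ h1]; ring
        _ ≤ _ := by linarith
  have hj : (1 : ℝ) ≤ 1 + ‖j‖ := by have := norm_nonneg j; linarith
  have ee : (n : ℝ) - (a + t) - v = -t := by rw [hv]; ring
  calc _ ≤ ∑ i ∈ I, (2 ^ v * ((1 + ‖i - j‖) ^ (-(a + t)) * (‖i - j‖ + (1 + ‖j‖)) ^ (-v)) +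
      (1 + ‖i‖) ^ (-(a + t)) * (‖i‖ + (1 + ‖j‖)) ^ (-v)) := Finset.sum_le_sum fun i _ => hpt i
    _ = 2 ^ v * ∑ l ∈ I.image (fun i => i - j), (1 + ‖l‖) ^ (-(a + t)) * (‖l‖ + (1 + ‖j‖)) ^ (-v) +
      ∑ i ∈ I, (1 + ‖i‖) ^ (-(a + t)) * (‖i‖ + (1 + ‖j‖)) ^ (-v) := by
        rw [Finset.sum_add_distrib, Finset.mul_sum, Finset.sum_image]
        intro x _ y _ hxy
        exact sub_left_injective hxy
    _ ≤ 2 ^ v * (C * (1 + ‖j‖) ^ ((n : ℝ) - (a + t) - v)) +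
        C * (1 + ‖j‖) ^ ((n : ℝ) - (a + t) - v) := by
        gcongr
        · exact h _ _ hj
        · exact h _ _ hj
    _ = _ := by rw [ee]; ring

/-- normalized bilinear form bound -/
def fsBB {X : Type} (K : X → X → ℝ) (p r C : ℝ) : Prop :=
  ∀ (I J : Finset X) (f g : X → ℝ), (∀ i, 0 ≤ f i) → (∀ j, 0 ≤ g j) →
    ∑ i ∈ I, f i ^ p ≤ 1 → ∑ j ∈ J, g j ^ r ≤ 1 →
    ∑ i ∈ I, ∑ j ∈ J, K i j * (f i * g j) ≤ C

lemma fsBB_S {n : ℕ} (a p r : ℝ) (ha : 0 ≤ a) (han : a < n) (hpr : p.HolderConjugate r) :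
    ∃ C : ℝ, 0 < C ∧ fsBB (fsS (n := n) a) p r C := by
  have hp := hpr.lt
  have hr := hpr.symm.lt
  set s : ℝ := (n - a) / (p + r) / 2 with hs
  have hs0 : 0 < s := by have : 0 < (n : ℝ) - a := by linarith
                         positivity
  have hspr : s * (p + r) = (n - a) / 2 := by rw [hs]; field_simp
  have hsp : 0 < s * p := by positivity
  have hsr : 0 < s * r := by positivity
  obtain ⟨C1, hC1, h1⟩ := fs_schur (n := n) a (s * p) ha hsp (by nlinarith)
  obtain ⟨C2, hC2, h2⟩ := fs_schur (n := n) a (s * r) ha hsr (by nlinarith)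
  refine ⟨C1 + C2, by positivity, ?_⟩
  intro I J f g hf hg hfI hgJ
  have hpt : ∀ i j : Fin n → ℤ, fsS a i j * (f i * g j) ≤
      f i ^ p * (1 + ‖i‖) ^ (s * p) * (fsS a j i * (1 + ‖j‖) ^ (-(s * p))) +
      g j ^ r * (1 + ‖j‖) ^ (s * r) * (fsS a i j * (1 + ‖i‖) ^ (-(s * r))) := by
    intro i j
    have h0 : 0 < 1 + ‖i‖ := by positivity
    have h0' : 0 < 1 + ‖j‖ := by positivity
    have hi : 0 < (1 + ‖i‖) ^ s := by positivity
    have hj : 0 < (1 + ‖j‖) ^ s := by positivity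
    set w := (1 + ‖i‖) ^ s / (1 + ‖j‖) ^ s with hw
    have hw0 : 0 < w := by positivity
    have hfi := hf i
    have hgj := hg j
    have hy := Real.young_inequality_of_nonneg (a := f i * w) (b := g j / w)
      (by positivity) (by positivity) hpr
    have e1 : f i * w * (g j / w) = f i * g j := by field_simp
    have e2 : (f i * w) ^ p = f i ^ p * (1 + ‖i‖) ^ (s * p) * (1 + ‖j‖) ^ (-(s * p)) := by
      rw [Real.mul_rpow (hf i) hw0.le, hw, Real.div_rpow hi.le hj.le, ← Real.rpow_mul h0.le,
        ← Real.rpow_mul h0'.le, Real.rpow_neg h0'.le]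
      ring
    have e3 : (g j / w) ^ r = g j ^ r * (1 + ‖j‖) ^ (s * r) * (1 + ‖i‖) ^ (-(s * r)) := by
      rw [Real.div_rpow (hg j) hw0.le, hw, Real.div_rpow hi.le hj.le, ← Real.rpow_mul h0.le,
        ← Real.rpow_mul h0'.le, Real.rpow_neg h0.le]
      field_simp
    have d1 : (f i * w) ^ p / p ≤ (f i * w) ^ p := div_le_self (by positivity) hp.le
    have d2 : (g j / w) ^ r / r ≤ (g j / w) ^ r := div_le_self (by positivity) hr.le
    have : f i * g j ≤ (f i * w) ^ p + (g j / w) ^ r := by linarith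
    calc _ ≤ fsS a i j * ((f i * w) ^ p + (g j / w) ^ r) :=
          mul_le_mul_of_nonneg_left this (fsS_nonneg _ _ _)
      _ = _ := by rw [e2, e3, fsS_symm a j i]; ring
  calc _ ≤ ∑ i ∈ I, ∑ j ∈ J,
      (f i ^ p * (1 + ‖i‖) ^ (s * p) * (fsS a j i * (1 + ‖j‖) ^ (-(s * p))) +
      g j ^ r * (1 + ‖j‖) ^ (s * r) * (fsS a i j * (1 + ‖i‖) ^ (-(s * r)))) :=
        Finset.sum_le_sum fun i _ => Finset.sum_le_sum fun j _ => hpt i j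
    _ = ∑ i ∈ I, f i ^ p * (1 + ‖i‖) ^ (s * p) * ∑ j ∈ J, (fsS a j i * (1 + ‖j‖) ^ (-(s * p))) +
        ∑ j ∈ J, g j ^ r * (1 + ‖j‖) ^ (s * r) * ∑ i ∈ I, (fsS a i j * (1 + ‖i‖) ^ (-(s * r))) := by
        simp only [Finset.sum_add_distrib, Finset.mul_sum]
        congr 1
        exact Finset.sum_comm
    _ ≤ ∑ i ∈ I, f i ^ p * (1 + ‖i‖) ^ (s * p) * (C1 * (1 + ‖i‖) ^ (-(s * p))) +
        ∑ j ∈ J, g j ^ r * (1 + ‖j‖) ^ (s * r) * (C2 * (1 + ‖j‖) ^ (-(s * r))) := by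
        apply add_le_add
        · refine Finset.sum_le_sum fun i _ => ?_
          have := hf i
          exact mul_le_mul_of_nonneg_left (h1 J i) (by positivity)
        · refine Finset.sum_le_sum fun j _ => ?_
          have := hg j
          exact mul_le_mul_of_nonneg_left (h2 I j) (by positivity)
    _ = C1 * ∑ i ∈ I, f i ^ p + C2 * ∑ j ∈ J, g j ^ r := by
        rw [Finset.mul_sum, Finset.mul_sum]
        congr 1
        · refine Finset.sum_congr rfl fun i _ => ?_
          have h0 : 0 < 1 + ‖i‖ := by positivity
          rw [Real.rpow_neg h0.le]; field_simp
        · refine Finset.sum_congr rfl fun i _ => ?_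
          have h0 : 0 < 1 + ‖i‖ := by positivity
          rw [Real.rpow_neg h0.le]; field_simp
    _ ≤ C1 * 1 + C2 * 1 := by gcongr
    _ = _ := by ring

lemma fs_half {n : ℕ} (hn : 1 ≤ n) (α r : ℝ) (hα : 0 < α) (hαn : α < n) (hr : 1 < r)
    (hrα : r * α < n) : ∃ C : ℝ, 0 < C ∧ ∀ (J : Finset (Fin n → ℤ)) (g : (Fin n → ℤ) → ℝ)
      (i : Fin n → ℤ) (lam : ℝ), 0 < lam → (∀ j, 0 ≤ g j) → ∑ j ∈ J, g j ^ r ≤ 1 →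
      (∀ j ∈ J, g j ≤ lam) →
      ∑ j ∈ J, (1 + ‖i - j‖) ^ (-((n : ℝ) - α)) * g j ≤ C * lam ^ (1 - r * α / n) := by
  have hn0 : (0 : ℝ) < n := by exact_mod_cast hn
  have hconj : r.HolderConjugate (Real.conjExponent r) := Real.HolderConjugate.conjExponent hr
  set s := Real.conjExponent r with hs
  have hs1 : 1 < s := hconj.symm.lt
  have hrs : r⁻¹ + s⁻¹ = 1 := hconj.inv_add_inv_eq_one
  have hsinv : s⁻¹ = 1 - r⁻¹ := by linarith
  have hr0 : 0 < r := by linarith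
  have hs0 : 0 < s := by linarith
  have hfar : (n : ℝ) < (n - α) * s := by
    have h1 : α < n * r⁻¹ := by
      rw [← div_eq_mul_inv, lt_div_iff₀ hr0]; linarith
    have h2 : n * s⁻¹ < n - α := by rw [hsinv]; linarith
    rw [← div_eq_mul_inv, div_lt_iff₀ hs0] at h2
    exact h2
  obtain ⟨C1, hC1, h1⟩ := fs_near (n := n) (n - α) (by linarith) (by linarith)
  obtain ⟨C2, hC2, h2⟩ := fs_far (n := n) ((n - α) * s) hfar
  refine ⟨C1 + C2 ^ (1 / s), by positivity, ?_⟩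
  intro J g i lam hlam hg hgJ hglam
  set R : ℝ := lam ^ (-(r / n)) with hR
  have hR0 : 0 < R := by positivity
  have inj : ∀ S : Finset (Fin n → ℤ), Set.InjOn (fun j => i - j) S := by
    intro S x _ y _ hxy
    exact sub_right_injective hxy
  rw [← Finset.sum_filter_add_sum_filter_not J (fun j => 1 + ‖i - j‖ ≤ R), add_mul]
  apply add_le_add
  · calc _ ≤ ∑ j ∈ J with 1 + ‖i - j‖ ≤ R, (1 + ‖i - j‖) ^ (-((n : ℝ) - α)) * lam := by
          refine Finset.sum_le_sum fun j hj => ?_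
          have := hglam j (Finset.mem_filter.1 hj).1
          gcongr
      _ = (∑ l ∈ (J.filter (fun j => 1 + ‖i - j‖ ≤ R)).image (fun j => i - j),
            (1 + ‖l‖) ^ (-((n : ℝ) - α))) * lam := by
          rw [Finset.sum_mul, Finset.sum_image (inj _)]
      _ ≤ (C1 * R ^ ((n : ℝ) - (n - α))) * lam := by
          gcongr
          apply h1 _ R hR0
          intro l hl
          obtain ⟨j, hj, rfl⟩ := Finset.mem_image.1 hl
          exact (Finset.mem_filter.1 hj).2
      _ = _ := by
          rw [hR, ← Real.rpow_mul hlam.le, mul_assoc, ← Real.rpow_add_one hlam.ne']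
          congr 2; field_simp; ring
  · set F := J.filter (fun j => ¬ (1 + ‖i - j‖ ≤ R)) with hF
    have hgF : ∑ j ∈ F, g j ^ r ≤ 1 := by
      refine (Finset.sum_le_sum_of_subset_of_nonneg (Finset.filter_subset _ _) ?_).trans hgJ
      intro j _ _
      have := hg j
      positivity
    have hK : ∑ j ∈ F, ((1 + ‖i - j‖) ^ (-((n : ℝ) - α))) ^ s ≤
        C2 * R ^ ((n : ℝ) - (n - α) * s) := by
      calc _ = ∑ l ∈ F.image (fun j => i - j), (1 + ‖l‖) ^ (-(((n : ℝ) - α) * s)) := by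
            rw [Finset.sum_image (inj _)]
            refine Finset.sum_congr rfl fun j _ => ?_
            rw [← Real.rpow_mul (by positivity)]; ring_nf
        _ ≤ _ := by
            apply h2 _ R hR0
            intro l hl
            obtain ⟨j, hj, rfl⟩ := Finset.mem_image.1 hl
            exact (not_le.1 (Finset.mem_filter.1 hj).2).le
    calc _ ≤ (∑ j ∈ F, ((1 + ‖i - j‖) ^ (-((n : ℝ) - α))) ^ s) ^ (1 / s) *
          (∑ j ∈ F, g j ^ r) ^ (1 / r) :=
          Real.inner_le_Lp_mul_Lq_of_nonneg F hconj.symm (fun j _ => by positivity)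
            (fun j _ => hg j)
      _ ≤ (C2 * R ^ ((n : ℝ) - (n - α) * s)) ^ (1 / s) * 1 := by
          have hg0 : 0 ≤ ∑ j ∈ F, g j ^ r := Finset.sum_nonneg fun j _ => by
            have := hg j
            positivity
          gcongr
          exact Real.rpow_le_one hg0 hgF (by positivity)
      _ = _ := by
          rw [mul_one, Real.mul_rpow hC2.le (by positivity), hR, ← Real.rpow_mul hlam.le,
            ← Real.rpow_mul hlam.le]
          congr 2
          have : ((n : ℝ) - (n - α) * s) * (1 / s) = n * s⁻¹ - (n - α) := by field_simp
          rw [mul_assoc, this, hsinv]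
          field_simp; ring

lemma fsBB_hls {n : ℕ} (hn : 1 ≤ n) (α p r : ℝ) (hα : 0 < α) (hαn : α < n) (hp : 1 < p)
    (hr : 1 < r) (hpr : 1 / p + 1 / r = 1 + α / n) :
    ∃ C : ℝ, 0 < C ∧
      fsBB (fun i j : Fin n → ℤ => (1 + ‖i - j‖) ^ (-((n : ℝ) - α))) p r C := by
  have hn0 : (0 : ℝ) < n := by exact_mod_cast hn
  have hp0 : 0 < p := by linarith
  have hr0 : 0 < r := by linarith
  have hp1 : 1 / p < 1 := by rw [div_lt_one hp0]; exact hp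
  have hr1 : 1 / r < 1 := by rw [div_lt_one hr0]; exact hr
  have hrα : r * α < n := by
    have : α / n < 1 / r := by linarith
    rw [div_lt_div_iff₀ hn0 hr0] at this; linarith
  have hpα : p * α < n := by
    have : α / n < 1 / p := by linarith
    rw [div_lt_div_iff₀ hn0 hp0] at this; linarith
  obtain ⟨C1, hC1, h1⟩ := fs_half hn α r hα hαn hr hrα
  obtain ⟨C2, hC2, h2⟩ := fs_half hn α p hα hαn hp hpα
  refine ⟨C1 + C2, by positivity, ?_⟩
  intro I J f g hf hg hfI hgJ
  set K := fun i j : Fin n → ℤ => (1 + ‖i - j‖) ^ (-((n : ℝ) - α)) with hK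
  have hK0 : ∀ i j, 0 ≤ K i j := fun i j => by rw [hK]; positivity
  have hKs : ∀ i j, K i j = K j i := fun i j => by simp only [hK, norm_sub_rev]
  -- one-sided bounds
  have side : ∀ (p r C : ℝ), 1 < p → 1 < r → 1 / p + 1 / r = 1 + α / n → 0 < C →
      (∀ (J : Finset (Fin n → ℤ)) (g : (Fin n → ℤ) → ℝ)
      (i : Fin n → ℤ) (lam : ℝ), 0 < lam → (∀ j, 0 ≤ g j) → ∑ j ∈ J, g j ^ r ≤ 1 →
      (∀ j ∈ J, g j ≤ lam) →
      ∑ j ∈ J, (1 + ‖i - j‖) ^ (-((n : ℝ) - α)) * g j ≤ C * lam ^ (1 - r * α / n)) →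
      ∀ (I J : Finset (Fin n → ℤ)) (f g : (Fin n → ℤ) → ℝ), (∀ i, 0 ≤ f i) → (∀ j, 0 ≤ g j) →
      ∑ i ∈ I, f i ^ p ≤ 1 → ∑ j ∈ J, g j ^ r ≤ 1 →
      ∑ i ∈ I, ∑ j ∈ J with g j ≤ f i ^ (p / r), K i j * (f i * g j) ≤ C := by
    intro p r C hp hr hpr hC h I J f g hf hg hfI hgJ
    have hp0 : 0 < p := by linarith
    have hr0 : 0 < r := by linarith
    calc _ ≤ ∑ i ∈ I, C * f i ^ p := by
          refine Finset.sum_le_sum fun i _ => ?_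
          rcases (hf i).eq_or_lt with h0 | h0
          · rw [← h0]; simp [Real.zero_rpow hp0.ne']
          have := h (J.filter (fun j => g j ≤ f i ^ (p / r))) g i (f i ^ (p / r)) (by positivity)
            hg ((Finset.sum_le_sum_of_subset_of_nonneg (Finset.filter_subset _ _)
              (fun j _ _ => by have := hg j; positivity)).trans hgJ)
            (fun j hj => (Finset.mem_filter.1 hj).2)
          have e : f i ^ p = f i * (f i ^ (p / r)) ^ (1 - r * α / n) := by
            rw [← Real.rpow_mul h0.le]
            have : p / r * (1 - r * α / n) = p - 1 := by
              have h3 : 1 / r - α / n = 1 - 1 / p := by linarith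
              calc p / r * (1 - r * α / n) = p * (1 / r - α / n) := by field_simp
                _ = _ := by rw [h3]; field_simp
            rw [this]
            nth_rewrite 2 [← Real.rpow_one (f i)]
            rw [← Real.rpow_add h0]; ring_nf
          calc _ = f i * ∑ j ∈ J with g j ≤ f i ^ (p / r), K i j * g j := by
                rw [Finset.mul_sum]; exact Finset.sum_congr rfl fun j _ => by ring
            _ ≤ f i * (C * (f i ^ (p / r)) ^ (1 - r * α / n)) := by gcongr
            _ = _ := by rw [e]; ring
      _ = C * ∑ i ∈ I, f i ^ p := by rw [Finset.mul_sum]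
      _ ≤ C * 1 := by gcongr
      _ = C := mul_one C
  have s1 := side p r C1 hp hr hpr hC1 h1 I J f g hf hg hfI hgJ
  have s2 := side r p C2 hr hp (by linarith) hC2 h2 J I g f hg hf hgJ hfI
  have e2 : ∑ j ∈ J, ∑ i ∈ I with f i ≤ g j ^ (r / p), K j i * (g j * f i) =
      ∑ i ∈ I, ∑ j ∈ J with f i ≤ g j ^ (r / p), K i j * (f i * g j) := by
    simp only [Finset.sum_filter]
    rw [Finset.sum_comm]
    refine Finset.sum_congr rfl fun i _ => Finset.sum_congr rfl fun j _ => ?_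
    rw [hKs j i, mul_comm (g j)]
  rw [e2] at s2
  refine le_trans ?_ (add_le_add s1 s2)
  rw [← Finset.sum_add_distrib]
  refine Finset.sum_le_sum fun i _ => ?_
  simp only [Finset.sum_filter]
  rw [← Finset.sum_add_distrib]
  refine Finset.sum_le_sum fun j _ => ?_
  have hnn : 0 ≤ K i j * (f i * g j) := mul_nonneg (hK0 i j) (mul_nonneg (hf i) (hg j))
  by_cases hc : g j ≤ f i ^ (p / r)
  · rw [if_pos hc]
    split_ifs <;> linarith
  · rw [if_neg hc, if_pos]
    · linarith
    · have h3 : (f i ^ (p / r)) ^ (r / p) ≤ g j ^ (r / p) := by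
        apply Real.rpow_le_rpow _ (not_le.1 hc).le (by positivity)
        have := hf i
        positivity
      rw [← Real.rpow_mul (hf i)] at h3
      have : p / r * (r / p) = 1 := by field_simp
      rwa [this, Real.rpow_one] at h3

lemma fsBB_comp {X : Type} {K : X → X → ℝ} {p r C : ℝ} (h : fsBB K p r C) (φ : X → X)
    (hφ : Function.Injective φ) : fsBB (fun i j => K i (φ j)) p r C := by
  intro I J f g hf hg hfI hgJ
  have hext : ∀ x, Function.extend φ g 0 (φ x) = g x := fun x => hφ.extend_apply _ _ _
  have := h I (J.image φ) f (Function.extend φ g 0) hf (by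
    intro j
    by_cases hj : ∃ x, φ x = j
    · obtain ⟨x, rfl⟩ := hj
      rw [hext]; exact hg x
    · rw [Function.extend_apply' _ _ _ hj]; simp) hfI (by
    rw [Finset.sum_image hφ.injOn]
    simpa only [hext] using hgJ)
  simpa only [Finset.sum_image hφ.injOn, hext] using this

lemma fsBB_sum {X : Type} {m : ℕ} {K : Fin m → X → X → ℝ} {p r : ℝ}
    (h : ∀ k, ∃ C : ℝ, 0 < C ∧ fsBB (K k) p r C) :
    ∃ C : ℝ, 0 < C ∧ fsBB (fun i j => ∑ k, K k i j) p r C := by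
  choose C hC h using h
  refine ⟨1 + ∑ k, C k, by have : 0 ≤ ∑ k, C k := Finset.sum_nonneg fun k _ => (hC k).le
                           linarith, ?_⟩
  intro I J f g hf hg hfI hgJ
  calc _ = ∑ k, ∑ i ∈ I, ∑ j ∈ J, K k i j * (f i * g j) := by
        simp only [Finset.sum_mul]
        rw [Finset.sum_comm]
        rw [Finset.sum_comm]
        rw [Finset.sum_comm (s := Finset.univ)]
        refine Finset.sum_congr rfl fun i _ => Finset.sum_comm
    _ ≤ ∑ k, C k := Finset.sum_le_sum fun k _ => h k I J f g hf hg hfI hgJ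
    _ ≤ _ := by linarith

lemma fsBB_mono {X : Type} {K K' : X → X → ℝ} {p r C D : ℝ} (hD : 0 ≤ D)
    (hK : ∀ i j, K i j ≤ D * K' i j) (h : fsBB K' p r C) : fsBB K p r (D * C) := by
  intro I J f g hf hg hfI hgJ
  calc _ ≤ ∑ i ∈ I, ∑ j ∈ J, D * (K' i j * (f i * g j)) := by
        refine Finset.sum_le_sum fun i _ => Finset.sum_le_sum fun j _ => ?_
        rw [← mul_assoc D]
        exact mul_le_mul_of_nonneg_right (hK i j) (mul_nonneg (hf i) (hg j))
    _ = D * ∑ i ∈ I, ∑ j ∈ J, K' i j * (f i * g j) := by simp only [Finset.mul_sum]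
    _ ≤ D * C := mul_le_mul_of_nonneg_left (h I J f g hf hg hfI hgJ) hD

lemma fs_dual1 {X : Type} {K : X → X → ℝ} {p q r C : ℝ} (hC : 0 ≤ C) (hK : ∀ i j, 0 ≤ K i j)
    (h : fsBB K p r C) (hqr : q.HolderConjugate r) (I J : Finset X) (f : X → ℝ)
    (hf : ∀ i, 0 ≤ f i) (hfI : ∑ i ∈ I, f i ^ p ≤ 1) :
    ∑ j ∈ J, (∑ i ∈ I, K i j * f i) ^ q ≤ C ^ q := by
  have hq1 := hqr.lt
  have hr1 := hqr.symm.lt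
  have hq0 : 0 < q := by linarith
  have hr0 : 0 < r := by linarith
  set F : X → ℝ := fun j => ∑ i ∈ I, K i j * f i with hF
  have hF0 : ∀ j, 0 ≤ F j := fun j => Finset.sum_nonneg fun i _ => mul_nonneg (hK i j) (hf i)
  set S := ∑ j ∈ J, F j ^ q with hS
  have hS0 : 0 ≤ S := Finset.sum_nonneg fun j _ => by have := hF0 j; positivity
  rcases hS0.eq_or_lt with h0 | h0
  · rw [← h0]; positivity
  have hb := h I J f (fun j => F j ^ (q - 1) / S ^ (1 / r)) hf
    (fun j => by have := hF0 j; positivity) hfI (by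
      apply le_of_eq
      have : ∀ j ∈ J, (F j ^ (q - 1) / S ^ (1 / r)) ^ r = F j ^ q / S := by
        intro j _
        have := hF0 j
        rw [Real.div_rpow (by positivity) (by positivity), ← Real.rpow_mul this,
          ← Real.rpow_mul h0.le, hqr.sub_one_mul_conj]
        congr 1
        rw [one_div, inv_mul_cancel₀ hr0.ne', Real.rpow_one]
      rw [Finset.sum_congr rfl this, ← Finset.sum_div, div_self h0.ne'])
  have e : ∑ i ∈ I, ∑ j ∈ J, K i j * (f i * (F j ^ (q - 1) / S ^ (1 / r))) = S ^ (1 / q) := by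
    rw [Finset.sum_comm]
    have : ∀ j ∈ J, ∑ i ∈ I, K i j * (f i * (F j ^ (q - 1) / S ^ (1 / r))) =
        F j ^ q / S ^ (1 / r) := by
      intro j _
      have e1 : F j ^ q = F j * F j ^ (q - 1) := by
        rcases (hF0 j).eq_or_lt with h1 | h1
        · rw [← h1, Real.zero_rpow hq0.ne']; simp
        · nth_rewrite 2 [← Real.rpow_one (F j)]
          rw [← Real.rpow_add h1]; ring_nf
      rw [e1, mul_div_assoc]
      nth_rewrite 2 [hF]
      rw [Finset.sum_mul]
      exact Finset.sum_congr rfl fun i _ => by ring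
    rw [Finset.sum_congr rfl this, ← Finset.sum_div, ← hS]
    have h3 : (1 : ℝ) / q = 1 - 1 / r := by
      have := hqr.inv_add_inv_eq_one
      rw [one_div, one_div]; linarith
    rw [h3, Real.rpow_sub h0, Real.rpow_one]
  rw [e] at hb
  calc S = (S ^ (1 / q)) ^ q := by
        rw [← Real.rpow_mul h0.le, one_div, inv_mul_cancel₀ hq0.ne', Real.rpow_one]
    _ ≤ C ^ q := Real.rpow_le_rpow (by positivity) hb hq0.le

lemma fs_dual2 {X : Type} {K : X → X → ℝ} {p q r C : ℝ} (hC : 0 ≤ C) (hK : ∀ i j, 0 ≤ K i j)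
    (hp : 0 < p) (h : fsBB K p r C) (hqr : q.HolderConjugate r) (I J : Finset X) (f : X → ℝ)
    (hf : ∀ i, 0 ≤ f i) :
    ∑ j ∈ J, (∑ i ∈ I, K i j * f i) ^ q ≤ (C * (∑ i ∈ I, f i ^ p) ^ (1 / p)) ^ q := by
  have hq0 : 0 < q := by have := hqr.lt; linarith
  set S := ∑ i ∈ I, f i ^ p with hS
  have hS0 : 0 ≤ S := Finset.sum_nonneg fun j _ => by have := hf j; positivity
  rcases hS0.eq_or_lt with h0 | h0
  · have hz : ∀ i ∈ I, f i = 0 := by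
      intro i hi
      have := (Finset.sum_eq_zero_iff_of_nonneg (fun j _ => by have := hf j; positivity)).1
        h0.symm i hi
      exact (Real.rpow_eq_zero (hf i) hp.ne').1 this
    have : ∀ j ∈ J, (∑ i ∈ I, K i j * f i) ^ q = 0 := by
      intro j _
      rw [Finset.sum_eq_zero (fun i hi => by rw [hz i hi, mul_zero]), Real.zero_rpow hq0.ne']
    rw [Finset.sum_congr rfl this]
    simp only [Finset.sum_const_zero]
    positivity
  set N := S ^ (1 / p) with hN
  have hN0 : 0 < N := by positivity
  have hNp : N ^ p = S := by
    rw [hN, ← Real.rpow_mul h0.le, one_div, inv_mul_cancel₀ hp.ne', Real.rpow_one]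
  have := fs_dual1 hC hK h hqr I J (fun i => f i / N) (fun i => div_nonneg (hf i) hN0.le) (by
    apply le_of_eq
    simp only [Real.div_rpow (hf _) hN0.le]
    rw [← Finset.sum_div, hNp, ← hS, div_self h0.ne'])
  have e : ∀ j ∈ J, (∑ i ∈ I, K i j * f i) ^ q = (∑ i ∈ I, K i j * (f i / N)) ^ q * N ^ q := by
    intro j _
    rw [← Real.mul_rpow (Finset.sum_nonneg fun i _ =>
      mul_nonneg (hK i j) (div_nonneg (hf i) hN0.le)) hN0.le, Finset.sum_mul]
    congr 1
    exact Finset.sum_congr rfl fun i _ => by field_simp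
  rw [Finset.sum_congr rfl e, ← Finset.sum_mul, Real.mul_rpow hC hN0.le]
  gcongr

lemma fs_dual3 {X : Type} {K : X → X → ℝ} {p q r C : ℝ} (hC : 0 ≤ C) (hK : ∀ i j, 0 ≤ K i j)
    (hp : 0 < p) (h : fsBB K p r C) (hqr : q.HolderConjugate r) (f : X → ℝ)
    (hf : ∀ i, 0 ≤ f i) :
    (∑' j, (∑' i, ENNReal.ofReal (K i j * f i)) ^ q) ^ (1 / q) ≤
      ENNReal.ofReal C * (∑' i, ENNReal.ofReal (f i) ^ p) ^ (1 / p) := by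
  have hq0 : 0 < q := by have := hqr.lt; linarith
  rw [one_div q, ENNReal.rpow_inv_le_iff hq0]
  set B := (ENNReal.ofReal C * (∑' i, ENNReal.ofReal (f i) ^ p) ^ (1 / p)) ^ q with hB
  rw [ENNReal.tsum_eq_iSup_sum]
  refine iSup_le fun J => ?_
  have hlim : Filter.Tendsto
      (fun I : Finset X => ∑ j ∈ J, (∑ i ∈ I, ENNReal.ofReal (K i j * f i)) ^ q) Filter.atTop
      (nhds (∑ j ∈ J, (∑' i, ENNReal.ofReal (K i j * f i)) ^ q)) := by
    apply tendsto_finsetSum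
    intro j _
    exact ((ENNReal.continuous_rpow_const (y := q)).tendsto _).comp
      (ENNReal.summable.hasSum : HasSum (fun i => ENNReal.ofReal (K i j * f i)) _)
  refine le_of_tendsto' hlim fun I => ?_
  have hKf : ∀ i j, 0 ≤ K i j * f i := fun i j => mul_nonneg (hK i j) (hf i)
  have hs : ∀ j, 0 ≤ ∑ i ∈ I, K i j * f i := fun j => Finset.sum_nonneg fun i _ => hKf i j
  have e1 : ∑ j ∈ J, (∑ i ∈ I, ENNReal.ofReal (K i j * f i)) ^ q =
      ENNReal.ofReal (∑ j ∈ J, (∑ i ∈ I, K i j * f i) ^ q) := by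
    rw [ENNReal.ofReal_sum_of_nonneg (fun j _ => by have := hs j; positivity)]
    refine Finset.sum_congr rfl fun j _ => ?_
    rw [← ENNReal.ofReal_rpow_of_nonneg (hs j) hq0.le,
      ENNReal.ofReal_sum_of_nonneg (fun i _ => hKf i j)]
  have hfp : ∀ i, 0 ≤ f i ^ p := fun i => by have := hf i; positivity
  have hS : 0 ≤ ∑ i ∈ I, f i ^ p := Finset.sum_nonneg fun i _ => hfp i
  have e2 : ENNReal.ofReal ((C * (∑ i ∈ I, f i ^ p) ^ (1 / p)) ^ q) =
      (ENNReal.ofReal C * (∑ i ∈ I, ENNReal.ofReal (f i) ^ p) ^ (1 / p)) ^ q := by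
    rw [← ENNReal.ofReal_rpow_of_nonneg (by positivity) hq0.le, ENNReal.ofReal_mul hC,
      ← ENNReal.ofReal_rpow_of_nonneg hS (by positivity),
      ENNReal.ofReal_sum_of_nonneg (fun i _ => hfp i)]
    congr 3
    refine Finset.sum_congr rfl fun i _ => ?_
    rw [ENNReal.ofReal_rpow_of_nonneg (hf i) hp.le]
  rw [e1]
  refine (ENNReal.ofReal_le_ofReal (fs_dual2 hC hK hp h hqr I J f hf)).trans ?_
  rw [e2, hB]
  gcongr
  exact ENNReal.sum_le_tsum I

lemma fs_norm_le_euc {n : ℕ} (v : Fin n → ℤ) : ‖v‖ ≤ eucZ v := by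
  unfold eucZ
  rw [pi_norm_le_iff_of_nonneg (Real.sqrt_nonneg _)]
  intro t
  rw [Int.norm_eq_abs]
  apply Real.abs_le_sqrt
  exact Finset.single_le_sum (f := fun k => (v k : ℝ) ^ 2) (fun k _ => sq_nonneg _)
    (Finset.mem_univ t)

lemma fs_one_le_norm {n : ℕ} (v : Fin n → ℤ) (hv : v ≠ 0) : 1 ≤ ‖v‖ := by
  obtain ⟨t, ht⟩ := Function.ne_iff.1 hv
  refine le_trans ?_ (norm_le_pi_norm v t)
  rw [Int.norm_eq_abs]
  exact_mod_cast Int.one_le_abs ht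

lemma fs_mulVec_le {n : ℕ} (B : Matrix (Fin n) (Fin n) ℤ) :
    ∃ D : ℝ, 0 ≤ D ∧ ∀ j : Fin n → ℤ, ‖B.mulVec j‖ ≤ D * ‖j‖ := by
  refine ⟨∑ s, ∑ t, ‖B s t‖, by positivity, fun j => ?_⟩
  rw [pi_norm_le_iff_of_nonneg (by positivity)]
  intro s
  calc ‖B.mulVec j s‖ ≤ ∑ t, ‖B s t * j t‖ := by
        have := norm_sum_le Finset.univ (fun t => B s t * j t)
        exact this
    _ ≤ ∑ t, ‖B s t‖ * ‖j‖ := by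
        refine Finset.sum_le_sum fun t _ => (norm_mul_le _ _).trans ?_
        gcongr
        exact norm_le_pi_norm j t
    _ = (∑ t, ‖B s t‖) * ‖j‖ := by rw [Finset.sum_mul]
    _ ≤ _ := by
        refine mul_le_mul_of_nonneg_right ?_ (norm_nonneg j)
        exact Finset.single_le_sum (f := fun s => ∑ t, ‖B s t‖) (fun s _ => by positivity)
          (Finset.mem_univ s)

lemma fs_le_mulVec {n : ℕ} (B : Matrix (Fin n) (Fin n) ℤ) (hB : B.det ≠ 0) :
    ∃ D : ℝ, 0 ≤ D ∧ ∀ j : Fin n → ℤ, ‖j‖ ≤ D * ‖B.mulVec j‖ := by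
  obtain ⟨D, hD, h⟩ := fs_mulVec_le B.adjugate
  refine ⟨D, hD, fun j => ?_⟩
  refine le_trans ?_ (h (B.mulVec j))
  rw [Matrix.mulVec_mulVec, Matrix.adjugate_mul, Matrix.smul_mulVec, Matrix.one_mulVec]
  rw [pi_norm_le_iff_of_nonneg (by positivity)]
  intro t
  refine le_trans ?_ (norm_le_pi_norm _ t)
  rw [Pi.smul_apply, smul_eq_mul, norm_mul]
  refine le_mul_of_one_le_left (norm_nonneg _) ?_
  rw [Int.norm_eq_abs]
  exact_mod_cast Int.one_le_abs hB

lemma fs_inj {n : ℕ} (B : Matrix (Fin n) (Fin n) ℤ) (hB : B.det ≠ 0) :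
    Function.Injective B.mulVec := by
  intro x y hxy
  obtain ⟨D, _, h⟩ := fs_le_mulVec B hB
  have := h (x - y)
  rw [Matrix.mulVec_sub, hxy, sub_self, norm_zero, mul_zero] at this
  exact sub_eq_zero.1 (norm_le_zero_iff.1 this)

/-- the kernel of the operator -/
noncomputable def fsK {n m : ℕ} (al : Fin m → ℝ) (A : Fin m → Matrix (Fin n) (Fin n) ℤ)
    (i j : Fin n → ℤ) : ℝ :=
  if ∀ k, i ≠ (A k).mulVec j then (∏ k, eucZ (i - (A k).mulVec j) ^ (al k))⁻¹ else 0

lemma fsK_nonneg {n m : ℕ} (al : Fin m → ℝ) (A : Fin m → Matrix (Fin n) (Fin n) ℤ)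
    (i j : Fin n → ℤ) : 0 ≤ fsK al A i j := by
  unfold fsK
  split_ifs
  · refine inv_nonneg.2 (Finset.prod_nonneg fun k _ => Real.rpow_nonneg (Real.sqrt_nonneg _) _)
  · exact le_rfl

lemma fsK_le {n m : ℕ} (al : Fin m → ℝ) (hal : ∀ k, 0 < al k)
    (A : Fin m → Matrix (Fin n) (Fin n) ℤ) (i j : Fin n → ℤ) :
    fsK al A i j ≤ 2 ^ (∑ k, al k) * ∏ k, (1 + ‖i - (A k).mulVec j‖) ^ (-(al k)) := by
  unfold fsK
  split_ifs with h
  · rw [← Finset.prod_inv_distrib, Real.rpow_sum_of_pos (by norm_num), ← Finset.prod_mul_distrib]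
    refine Finset.prod_le_prod
      (fun k _ => inv_nonneg.2 (Real.rpow_nonneg (Real.sqrt_nonneg _) _)) fun k _ => ?_
    have h1 := fs_one_le_norm (i - (A k).mulVec j) (sub_ne_zero.2 (h k))
    have h2 := fs_norm_le_euc (i - (A k).mulVec j)
    set x := ‖i - (A k).mulVec j‖
    set y := eucZ (i - (A k).mulVec j)
    have e : (2 : ℝ) ^ al k * (1 + x) ^ (-(al k)) = ((1 + x) / 2) ^ (-(al k)) := by
      rw [Real.div_rpow (by positivity) (by norm_num), Real.rpow_neg (by norm_num : (0:ℝ) ≤ 2),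
        div_inv_eq_mul, mul_comm]
    rw [e, ← Real.rpow_neg (by linarith)]
    exact Real.rpow_le_rpow_of_nonpos (by positivity) (by linarith) (by linarith [hal k])
  · positivity

lemma fs_prod_pos {n m : ℕ} (hm : 0 < m) (al : Fin m → ℝ) (hal : ∀ k, 0 < al k)
    (A : Fin m → Matrix (Fin n) (Fin n) ℤ) (i j : Fin n → ℤ) :
    ∏ k, (1 + ‖i - (A k).mulVec j‖) ^ (-(al k)) ≤
      ∑ k, (1 + ‖i - (A k).mulVec j‖) ^ (-(∑ l, al l)) := by
  have : Nonempty (Fin m) := ⟨⟨0, hm⟩⟩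
  obtain ⟨k, hk⟩ := Finite.exists_min (fun k => ‖i - (A k).mulVec j‖)
  have h0 : 0 < 1 + ‖i - (A k).mulVec j‖ := by positivity
  calc _ ≤ ∏ l, (1 + ‖i - (A k).mulVec j‖) ^ (-(al l)) := by
        refine Finset.prod_le_prod (fun l _ => by positivity) fun l _ => ?_
        exact Real.rpow_le_rpow_of_nonpos h0 (by linarith [hk l]) (by linarith [hal l])
    _ = (1 + ‖i - (A k).mulVec j‖) ^ (-(∑ l, al l)) := by
        rw [← Real.rpow_sum_of_pos h0, Finset.sum_neg_distrib]
    _ ≤ _ := Finset.single_le_sum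
        (f := fun k => (1 + ‖i - (A k).mulVec j‖) ^ (-(∑ l, al l)))
        (fun l _ => by positivity) (Finset.mem_univ k)

lemma fs_prod_zero {n m : ℕ} (hm : 0 < m) (al : Fin m → ℝ) (hal : ∀ k, 0 < al k)
    (hsum : ∑ k, al k = n) (A : Fin m → Matrix (Fin n) (Fin n) ℤ)
    (hA : ∀ k l, k ≠ l → (A k - A l).det ≠ 0) :
    ∃ E : ℝ, 0 < E ∧ ∀ i j : Fin n → ℤ, ∏ k, (1 + ‖i - (A k).mulVec j‖) ^ (-(al k)) ≤
      E * ∑ k, fsS (al k) i ((A k).mulVec j) := by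
  have : Nonempty (Fin m) := ⟨⟨0, hm⟩⟩
  have hD1 : ∀ k, ∃ D : ℝ, 0 ≤ D ∧ ∀ j : Fin n → ℤ, ‖(A k).mulVec j‖ ≤ D * ‖j‖ :=
    fun k => fs_mulVec_le (A k)
  have hD2 : ∀ k l, ∃ D : ℝ, 0 ≤ D ∧ (k ≠ l → ∀ j : Fin n → ℤ,
      ‖j‖ ≤ D * ‖(A k - A l).mulVec j‖) := by
    intro k l
    by_cases hkl : k = l
    · exact ⟨0, le_rfl, fun h => absurd hkl h⟩
    · obtain ⟨D, hD, h⟩ := fs_le_mulVec _ (hA k l hkl)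
      exact ⟨D, hD, fun _ => h⟩
  choose D1 hD10 hD1 using hD1
  choose D2 hD20 hD2 using hD2
  set P := ∑ k, D1 k with hP
  set Q := ∑ k, ∑ l, D2 k l with hQ
  have hP0 : 0 ≤ P := Finset.sum_nonneg fun k _ => hD10 k
  have hQ0 : 0 ≤ Q := Finset.sum_nonneg fun k _ => Finset.sum_nonneg fun l _ => hD20 k l
  have hPk : ∀ k, D1 k ≤ P := fun k => Finset.single_le_sum (fun k _ => hD10 k) (Finset.mem_univ k)
  have hQk : ∀ k l, D2 k l ≤ Q := fun k l =>
    (Finset.single_le_sum (f := fun l => D2 k l) (fun l _ => hD20 k l) (Finset.mem_univ l)).trans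
    (Finset.single_le_sum (f := fun k => ∑ l, D2 k l)
      (fun k _ => Finset.sum_nonneg fun l _ => hD20 k l) (Finset.mem_univ k))
  set E : ℝ := 2 + 4 * P * Q with hE
  have hE1 : 1 ≤ E := by have : 0 ≤ P * Q := by positivity
                         rw [hE]; linarith
  have hE0 : 0 < E := by linarith
  refine ⟨E ^ (n : ℝ), by positivity, fun i j => ?_⟩
  obtain ⟨k, hk⟩ := Finite.exists_min (fun k => ‖i - (A k).mulVec j‖)
  set W := 1 + ‖i‖ + ‖(A k).mulVec j‖ with hW
  have hW0 : 0 < W := by positivity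
  have hl : ∀ l, l ≠ k → W / E ≤ 1 + ‖i - (A l).mulVec j‖ := by
    intro l hlk
    set x := ‖i - (A l).mulVec j‖ with hx
    have hx0 : 0 ≤ x := norm_nonneg _
    have h1 : ‖(A l - A k).mulVec j‖ ≤ 2 * x := by
      have e : (A l - A k).mulVec j = (i - (A k).mulVec j) - (i - (A l).mulVec j) := by
        rw [Matrix.sub_mulVec]; abel
      rw [e]
      refine (norm_sub_le _ _).trans ?_
      have := hk l
      linarith
    have h2 : ‖j‖ ≤ Q * (2 * x) :=
      (hD2 l k hlk j).trans (mul_le_mul (hQk l k) h1 (norm_nonneg _) hQ0)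
    have h3 : ∀ k, ‖(A k).mulVec j‖ ≤ P * (Q * (2 * x)) := fun k =>
      (hD1 k j).trans (mul_le_mul (hPk k) h2 (norm_nonneg _) hP0)
    have h4 : ‖i‖ ≤ x + ‖(A l).mulVec j‖ := by
      have := norm_add_le (i - (A l).mulVec j) ((A l).mulVec j)
      rwa [sub_add_cancel] at this
    rw [div_le_iff₀ hE0, hW, hE]
    have h5 := h3 k
    have h6 := h3 l
    have : 0 ≤ P * Q := by positivity
    nlinarith
  have hnk : (n : ℝ) - al k = ∑ l ∈ Finset.univ.erase k, al l := by
    rw [← hsum, ← Finset.add_sum_erase _ _ (Finset.mem_univ k)]; ring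
  have hWE : 0 < W / E := by positivity
  have hnk0 : 0 ≤ (n : ℝ) - al k := by rw [hnk]; exact Finset.sum_nonneg fun l _ => (hal l).le
  calc _ = (1 + ‖i - (A k).mulVec j‖) ^ (-(al k)) *
        ∏ l ∈ Finset.univ.erase k, (1 + ‖i - (A l).mulVec j‖) ^ (-(al l)) :=
        (Finset.mul_prod_erase _ _ (Finset.mem_univ k)).symm
    _ ≤ (1 + ‖i - (A k).mulVec j‖) ^ (-(al k)) *
        ∏ l ∈ Finset.univ.erase k, (W / E) ^ (-(al l)) := by
        refine mul_le_mul_of_nonneg_left ?_ (by positivity)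
        refine Finset.prod_le_prod (fun l _ => by positivity) fun l hl' => ?_
        exact Real.rpow_le_rpow_of_nonpos hWE (hl l (Finset.ne_of_mem_erase hl'))
          (by linarith [hal l])
    _ = (1 + ‖i - (A k).mulVec j‖) ^ (-(al k)) * (W / E) ^ (-((n : ℝ) - al k)) := by
        rw [← Real.rpow_sum_of_pos hWE, Finset.sum_neg_distrib, hnk]
    _ = E ^ ((n : ℝ) - al k) * fsS (al k) i ((A k).mulVec j) := by
        unfold fsS
        rw [Real.div_rpow hW0.le hE0.le, Real.rpow_neg hE0.le, div_inv_eq_mul]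
        ring
    _ ≤ E ^ (n : ℝ) * fsS (al k) i ((A k).mulVec j) := by
        refine mul_le_mul_of_nonneg_right ?_ (fsS_nonneg _ _ _)
        exact Real.rpow_le_rpow_of_exponent_le hE1 (by linarith [hal k])
    _ ≤ _ := by
        gcongr
        exact Finset.single_le_sum (f := fun k => fsS (al k) i ((A k).mulVec j))
          (fun l _ => fsS_nonneg _ _ _) (Finset.mem_univ k)

theorem stmt2 (n : ℕ) (hn : 1 ≤ n) (α : ℝ) (hα0 : 0 ≤ α) (hαn : α < n)
    (m : ℕ) (hm : 1 - α / n < m)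
    (al : Fin m → ℝ) (hal : ∀ k, 0 < al k) (hsum : ∑ k, al k = n - α)
    (A : Fin m → Matrix (Fin n) (Fin n) ℤ) (hA : ∀ k, (A k).det ≠ 0)
    (hA0 : α = 0 → ∀ k l, k ≠ l → (A k - A l).det ≠ 0)
    (p q : ℝ) (hp : 1 < p) (hpn : α * p < n) (hq : 1 / q = 1 / p - α / n) :
    ∃ C : ℝ, 0 < C ∧ ∀ b : (Fin n → ℤ) → ℝ,
      (∑' j : Fin n → ℤ, (Tfs al A b j) ^ q) ^ (1 / q) ≤ ENNReal.ofReal C * lpNorm p b := by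
  have hn0 : (0 : ℝ) < n := by exact_mod_cast hn
  have hp0 : 0 < p := by linarith
  have hq1p : 0 < 1 / q := by
    rw [hq, sub_pos, div_lt_div_iff₀ hn0 hp0]; linarith
  have hq0 : 0 < q := by simpa using hq1p
  have hq1 : 1 < q := by
    have h1 : 1 / q < 1 := by
      have : 1 / p < 1 := by rw [div_lt_one hp0]; exact hp
      have : 0 ≤ α / n := by positivity
      linarith
    rwa [div_lt_one hq0] at h1
  have hqr : q.HolderConjugate (Real.conjExponent q) := Real.HolderConjugate.conjExponent hq1
  set r := Real.conjExponent q with hr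
  have hr1 : 1 < r := hqr.symm.lt
  have hqri := hqr.inv_add_inv_eq_one
  have hm0 : 0 < m := by
    have : α / n < 1 := by rw [div_lt_one hn0]; exact hαn
    have : (0 : ℝ) < m := by linarith
    exact_mod_cast this
  have hBB : ∃ C : ℝ, 0 < C ∧ fsBB (fsK al A) p r C := by
    rcases hα0.eq_or_lt with h0 | h0
    · have h0' : α = 0 := h0.symm
      have hsum' : ∑ k, al k = n := by rw [hsum, h0', sub_zero]
      have hpq : q = p := by
        rw [h0', zero_div, sub_zero, one_div, one_div] at hq
        exact inv_injective hq
      have hm1 : 1 < m := by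
        rw [h0', zero_div, sub_zero] at hm
        exact_mod_cast hm
      obtain ⟨E, hE, hEle⟩ := fs_prod_zero hm0 al hal hsum' A (hA0 h0')
      obtain ⟨C, hC, h⟩ := fsBB_sum (p := p) (r := r)
        (K := fun k (i j : Fin n → ℤ) => fsS (al k) i ((A k).mulVec j)) (by
          intro k
          have : Nontrivial (Fin m) := Fin.nontrivial_iff_two_le.2 hm1
          obtain ⟨l, hl⟩ := exists_ne k
          have hlt : al k < n := by
            rw [← hsum']
            exact Finset.single_lt_sum hl (Finset.mem_univ k) (Finset.mem_univ l) (hal l)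
              (fun t _ _ => (hal t).le)
          obtain ⟨C, hC, h⟩ := fsBB_S (n := n) (al k) p r (hal k).le hlt (hpq ▸ hqr)
          exact ⟨C, hC, fsBB_comp h _ (fs_inj _ (hA k))⟩)
      refine ⟨_, ?_, fsBB_mono (D := 2 ^ (∑ k, al k) * E) (by positivity) ?_ h⟩
      · positivity
      · intro i j
        refine (fsK_le al hal A i j).trans ?_
        rw [mul_assoc]
        exact mul_le_mul_of_nonneg_left (hEle i j) (by positivity)
    · have hpr : 1 / p + 1 / r = 1 + α / n := by
        rw [one_div] at hq
        rw [one_div r]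
        linarith
      obtain ⟨C, hC, h⟩ := fsBB_sum (p := p) (r := r)
        (K := fun (k : Fin m) (i j : Fin n → ℤ) =>
          (1 + ‖i - (A k).mulVec j‖) ^ (-((n : ℝ) - α))) (by
          intro k
          obtain ⟨C, hC, h⟩ := fsBB_hls hn α p r h0 hαn hp hr1 hpr
          exact ⟨C, hC, fsBB_comp h _ (fs_inj _ (hA k))⟩)
      refine ⟨_, ?_, fsBB_mono (D := 2 ^ (∑ k, al k)) (by positivity) ?_ h⟩
      · positivity
      · intro i j
        refine (fsK_le al hal A i j).trans ?_
        have := fs_prod_pos hm0 al hal A i j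
        rw [hsum] at this
        exact mul_le_mul_of_nonneg_left this (by positivity)
  obtain ⟨C, hC, h⟩ := hBB
  refine ⟨C, hC, fun b => ?_⟩
  have hT : ∀ j, Tfs al A b j = ∑' i, ENNReal.ofReal (fsK al A i j * |b i|) := by
    intro j
    unfold Tfs fsK
    refine tsum_congr fun i => ?_
    split_ifs
    · rw [div_eq_inv_mul]
    · simp
  simp only [hT]
  unfold lpNorm
  exact fs_dual3 hC.le (fsK_nonneg al A) hp0 h hqr (fun i => |b i|) (fun i => abs_nonneg _)
end

section
/- Let 0 < α < n and m ∈ ℕ, m ≥ 1, and let T_{α,m} be the discrete fractional series operator. Then for every sequence b : ℤ^n → ℝ and every j ∈ ℤ^n, |(T_{α,m} b)(j)| ≤ Σ_{k=1}^m (I_α |b|)(A_k j), where |b| denotes the sequence {|b(i)|}_{i∈ℤ^n}. -/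
open scoped ENNReal BigOperators Classical

theorem stmt3 (n : ℕ) (hn : 1 ≤ n) (α : ℝ) (hα0 : 0 < α) (hαn : α < n)
    (m : ℕ) (hm : 1 ≤ m)
    (al : Fin m → ℝ) (hal : ∀ k, 0 < al k) (hsum : ∑ k, al k = n - α)
    (A : Fin m → Matrix (Fin n) (Fin n) ℤ) (hA : ∀ k, (A k).det ≠ 0)
    (b : (Fin n → ℤ) → ℝ) (j : Fin n → ℤ) :
    Tfs al A b j ≤ ∑ k : Fin m, Iop α b ((A k).mulVec j) := by
  have hpos : ∀ v : Fin n → ℤ, v ≠ 0 → 0 < eucZ v := by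
    intro v hv
    obtain ⟨t, ht⟩ := Function.ne_iff.mp hv
    refine Real.sqrt_pos.mpr ?_
    refine Finset.sum_pos' (fun k _ => sq_nonneg _) ⟨t, Finset.mem_univ _, ?_⟩
    have : (v t : ℝ) ≠ 0 := by exact_mod_cast ht
    positivity
  unfold Tfs Iop
  rw [← Summable.tsum_finsetSum (fun _ _ => ENNReal.summable)]
  refine ENNReal.tsum_le_tsum fun i => ?_
  split_ifs with h
  · haveI : Nonempty (Fin m) := ⟨⟨0, hm⟩⟩
    obtain ⟨k0, hk0⟩ := Finite.exists_min (fun k => eucZ (i - (A k).mulVec j))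
    have h0 := hpos _ (sub_ne_zero.mpr (h k0))
    refine le_trans ?_ (Finset.single_le_sum (f := fun k => if i ≠ (A k).mulVec j then
      ENNReal.ofReal (|b i| / eucZ (i - (A k).mulVec j) ^ ((n : ℝ) - α)) else 0)
      (fun _ _ => zero_le) (Finset.mem_univ k0))
    simp only [if_pos (h k0)]
    refine ENNReal.ofReal_le_ofReal ?_
    refine div_le_div_of_nonneg_left (abs_nonneg _) (Real.rpow_pos_of_pos h0 _) ?_
    rw [← hsum, Real.rpow_sum_of_pos h0]
    exact Finset.prod_le_prod (fun k _ => (Real.rpow_pos_of_pos h0 _).le)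
      (fun k _ => Real.rpow_le_rpow h0.le (hk0 k) (hal k).le)
  · exact zero_le
end

section
/- Let α_1, α_2 > 0 with α_1 + α_2 = n, let A_1, A_2 be invertible n×n integer matrices with A_1 − A_2 invertible, and set d = min{|A_1 x − A_2 x| : |x| = 1} and D = max{‖A_1‖, ‖A_2‖} (operator norms). There is a constant C > 0, depending only on n, d and D, such that for every sequence b : ℤ^n → ℝ and every j_0 ∈ ℤ^n \ {0}, letting I_1 = {i : 0 < |i − A_1 j_0| ≤ (d/2)|j_0|}, I_2 = {i : 0 < |i − A_2 j_0| ≤ (d/2)|j_0|}, and I_3 = {i ∈ ℤ^n : |i| < 2√n D |j_0|} ∩ I_1^c ∩ I_2^c, one has Σ_{i ∈ I_3} |b(i)| / (|i − A_1 j_0|^{α_1} |i − A_2 j_0|^{α_2}) ≤ (2/d)^n |j_0|^{-n} Σ_{|i| < 2√n D |j_0|} |b(i)| ≤ C (M b)(j_0). -/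
open scoped ENNReal BigOperators Classical

theorem eucZ_nn {n : ℕ} (v : Fin n → ℤ) : 0 ≤ eucZ v := Real.sqrt_nonneg _

theorem abs_le_eucZ {n : ℕ} (v : Fin n → ℤ) (k : Fin n) : |(v k : ℝ)| ≤ eucZ v := by
  unfold eucZ
  apply Real.abs_le_sqrt
  exact Finset.single_le_sum (f := fun k => ((v k : ℝ)) ^ 2) (fun i _ => sq_nonneg _)
    (Finset.mem_univ k)

theorem one_le_eucZ {n : ℕ} (v : Fin n → ℤ) (hv : v ≠ 0) : 1 ≤ eucZ v := by
  obtain ⟨k, hk⟩ := Function.ne_iff.mp hv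
  refine le_trans ?_ (abs_le_eucZ v k)
  have : (1 : ℤ) ≤ |v k| := Int.one_le_abs hk
  exact_mod_cast this

theorem eucR_zero_imp {n : ℕ} (v : Fin n → ℝ) (h : eucR v = 0) : v = 0 := by
  unfold eucR at h
  rw [Real.sqrt_eq_zero (Finset.sum_nonneg fun i _ => sq_nonneg _)] at h
  rw [Finset.sum_eq_zero_iff_of_nonneg (fun i _ => sq_nonneg _)] at h
  funext k
  simpa using h k (Finset.mem_univ k)

theorem stmt5 (n : ℕ) (hn : 1 ≤ n) (α1 α2 : ℝ) (h1 : 0 < α1) (h2 : 0 < α2)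
    (hsum : α1 + α2 = n)
    (A1 A2 : Matrix (Fin n) (Fin n) ℤ) (hA1 : A1.det ≠ 0) (hA2 : A2.det ≠ 0)
    (hA12 : (A1 - A2).det ≠ 0)
    (d D : ℝ)
    (hd : IsLeast {r : ℝ | ∃ x : Fin n → ℝ, eucR x = 1 ∧
        r = eucR ((A1.map (Int.cast : ℤ → ℝ)).mulVec x - (A2.map (Int.cast : ℤ → ℝ)).mulVec x)} d)
    (hD : IsGreatest {r : ℝ | ∃ x : Fin n → ℝ, eucR x = 1 ∧
        (r = eucR ((A1.map (Int.cast : ℤ → ℝ)).mulVec x) ∨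
         r = eucR ((A2.map (Int.cast : ℤ → ℝ)).mulVec x))} D) :
    ∃ C : ℝ, 0 < C ∧ ∀ (b : (Fin n → ℤ) → ℝ) (j0 : Fin n → ℤ), j0 ≠ 0 →
      (∑' i : Fin n → ℤ,
          if eucZ i < 2 * Real.sqrt n * D * eucZ j0 ∧
              ¬(0 < eucZ (i - A1.mulVec j0) ∧ eucZ (i - A1.mulVec j0) ≤ d / 2 * eucZ j0) ∧
              ¬(0 < eucZ (i - A2.mulVec j0) ∧ eucZ (i - A2.mulVec j0) ≤ d / 2 * eucZ j0) then
            ENNReal.ofReal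
              (|b i| / (eucZ (i - A1.mulVec j0) ^ α1 * eucZ (i - A2.mulVec j0) ^ α2))
          else 0)
        ≤ ENNReal.ofReal ((2 / d) ^ n * eucZ j0 ^ (-(n : ℝ))) *
            (∑' i : Fin n → ℤ,
              if eucZ i < 2 * Real.sqrt n * D * eucZ j0 then ENNReal.ofReal |b i| else 0) ∧
      ENNReal.ofReal ((2 / d) ^ n * eucZ j0 ^ (-(n : ℝ))) *
            (∑' i : Fin n → ℤ,
              if eucZ i < 2 * Real.sqrt n * D * eucZ j0 then ENNReal.ofReal |b i| else 0)
          ≤ ENNReal.ofReal C * Mfr 0 b j0 := by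
  have hd0 : 0 < d := by
    obtain ⟨⟨x, hx, hdx⟩, -⟩ := hd
    rcases (Real.sqrt_nonneg _ : 0 ≤ eucR ((A1.map (Int.cast : ℤ → ℝ)).mulVec x -
      (A2.map (Int.cast : ℤ → ℝ)).mulVec x)).lt_or_eq with h | h
    · rw [hdx]; exact h
    · exfalso
      have h0 := eucR_zero_imp _ h.symm
      rw [← Matrix.sub_mulVec] at h0
      have hm : A1.map (Int.cast : ℤ → ℝ) - A2.map (Int.cast : ℤ → ℝ)
          = (A1 - A2).map (Int.castRingHom ℝ) := by
        ext i j; simp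
      rw [hm] at h0
      have hdet : ((A1 - A2).map (Int.castRingHom ℝ)).det ≠ 0 := by
        have := RingHom.map_det (Int.castRingHom ℝ) (A1 - A2)
        rw [RingHom.mapMatrix_apply] at this
        rw [← this]
        simpa using hA12
      have hx0 := Matrix.eq_zero_of_mulVec_eq_zero hdet h0
      rw [hx0] at hx
      simp [eucR] at hx
  have hD0 : 0 ≤ D := by
    obtain ⟨⟨x, hx, h | h⟩, -⟩ := hD <;> rw [h] <;> exact Real.sqrt_nonneg _
  have hsn : 0 ≤ Real.sqrt n := Real.sqrt_nonneg _
  have hs0 : 0 ≤ Real.sqrt n * D := mul_nonneg hsn hD0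
  refine ⟨(2 / d) ^ n * (4 * (Real.sqrt n * D) + 5) ^ n, by positivity, ?_⟩
  intro b j0 hj0
  have hj1 : 1 ≤ eucZ j0 := one_le_eucZ j0 hj0
  have hjp : 0 < eucZ j0 := by linarith
  constructor
  · rw [← ENNReal.tsum_mul_left]
    apply ENNReal.tsum_le_tsum
    intro i
    split_ifs with hc hc2 hc2
    · obtain ⟨-, ha, hb⟩ := hc
      rw [← ENNReal.ofReal_mul (by positivity)]
      apply ENNReal.ofReal_le_ofReal
      have hK : 0 ≤ (2 / d) ^ n * eucZ j0 ^ (-(n : ℝ)) * |b i| := by positivity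
      rcases (eucZ_nn (i - A1.mulVec j0)).lt_or_eq with hp1 | hp1
      · rcases (eucZ_nn (i - A2.mulVec j0)).lt_or_eq with hp2 | hp2
        · have g1 : d / 2 * eucZ j0 ≤ eucZ (i - A1.mulVec j0) := by
            by_contra h; exact ha ⟨hp1, by linarith⟩
          have g2 : d / 2 * eucZ j0 ≤ eucZ (i - A2.mulVec j0) := by
            by_contra h; exact hb ⟨hp2, by linarith⟩
          have hr : 0 < d / 2 * eucZ j0 := by positivity
          have e1 := Real.rpow_le_rpow hr.le g1 h1.le
          have e2 := Real.rpow_le_rpow hr.le g2 h2.le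
          have e3 : (d / 2 * eucZ j0) ^ n ≤
              eucZ (i - A1.mulVec j0) ^ α1 * eucZ (i - A2.mulVec j0) ^ α2 := by
            rw [← Real.rpow_natCast, ← hsum, Real.rpow_add hr]
            exact mul_le_mul e1 e2 (by positivity) (by positivity)
          have e4 : (2 / d) ^ n * eucZ j0 ^ (-(n : ℝ)) * |b i|
              = |b i| / (d / 2 * eucZ j0) ^ n := by
            rw [Real.rpow_neg hjp.le, Real.rpow_natCast, mul_pow, div_pow, div_pow]
            field_simp
          rw [e4]
          exact div_le_div_of_nonneg_left (abs_nonneg _) (by positivity) e3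
        · rw [← hp2, Real.zero_rpow h2.ne']; simpa using hK
      · rw [← hp1, Real.zero_rpow h1.ne']; simpa using hK
    · exact absurd hc.1 hc2
    · exact zero_le
    · exact zero_le
  · set R : ℝ := (2 * (Real.sqrt n * D) + 1) * eucZ j0 with hR
    have hR0 : 0 ≤ R := by positivity
    set N : ℕ := ⌈R⌉₊ with hN
    have hN1 : R ≤ N := Nat.le_ceil R
    have hN2 : (N : ℝ) < R + 1 := Nat.ceil_lt_add_one hR0
    set S := Finset.Icc (fun k => j0 k - (N : ℤ)) (fun k => j0 k + (N : ℤ)) with hS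
    have hmem : ∀ i : Fin n → ℤ, eucZ i < 2 * Real.sqrt n * D * eucZ j0 → i ∈ S := by
      intro i hi
      have key : ∀ k, |(i k : ℝ) - j0 k| ≤ N := by
        intro k
        have a1 := abs_le_eucZ i k
        have a2 := abs_le_eucZ j0 k
        have a3 := abs_sub (i k : ℝ) (j0 k)
        nlinarith
      rw [hS, Finset.mem_Icc]
      constructor <;> intro k <;> have := abs_le.mp (key k)
      · have h : ((j0 k - N : ℤ) : ℝ) ≤ (i k : ℝ) := by push_cast; linarith [this.1]
        exact_mod_cast h
      · have h : (i k : ℝ) ≤ ((j0 k + N : ℤ) : ℝ) := by push_cast; linarith [this.2]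
        exact_mod_cast h
    have hsumle : (∑' i : Fin n → ℤ,
        if eucZ i < 2 * Real.sqrt n * D * eucZ j0 then ENNReal.ofReal |b i| else 0)
        ≤ ENNReal.ofReal (∑ i ∈ S, |b i|) := by
      rw [tsum_eq_sum (s := S), ENNReal.ofReal_sum_of_nonneg (fun i _ => abs_nonneg _)]
      · apply Finset.sum_le_sum
        intro i _
        split_ifs
        · exact le_rfl
        · exact zero_le
      · intro i hi
        rw [if_neg (fun h => hi (hmem i h))]
    have hS0 : 0 ≤ ∑ i ∈ S, |b i| := Finset.sum_nonneg fun i _ => abs_nonneg _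
    have hM : ENNReal.ofReal ((2 * (N : ℝ) + 1) ^ ((0 : ℝ) - (n : ℝ)) * ∑ i ∈ S, |b i|)
        ≤ Mfr 0 b j0 :=
      le_iSup (fun N : ℕ => ENNReal.ofReal ((2 * (N : ℝ) + 1) ^ ((0 : ℝ) - (n : ℝ)) *
        ∑ i ∈ Finset.Icc (fun k => j0 k - (N : ℤ)) (fun k => j0 k + (N : ℤ)), |b i|)) N
    refine le_trans (mul_le_mul_right hsumle _) (le_trans ?_ (mul_le_mul_right hM _))
    rw [← ENNReal.ofReal_mul (by positivity), ← ENNReal.ofReal_mul (by positivity)]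
    apply ENNReal.ofReal_le_ofReal
    rw [← mul_assoc]
    apply mul_le_mul_of_nonneg_right _ hS0
    have hT : 2 * (N : ℝ) + 1 ≤ (4 * (Real.sqrt n * D) + 5) * eucZ j0 := by nlinarith
    have hTn := pow_le_pow_left₀ (by positivity) hT n
    rw [zero_sub, Real.rpow_neg hjp.le, Real.rpow_neg (by positivity), Real.rpow_natCast,
      Real.rpow_natCast, mul_assoc]
    apply mul_le_mul_of_nonneg_left _ (by positivity)
    rw [← div_eq_mul_inv, inv_eq_one_div, div_le_div_iff₀ (by positivity) (by positivity),
      one_mul, ← mul_pow]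
    exact hTn
end

section
/- Let α_1, α_2 > 0 with α_1 + α_2 = n, let A_1, A_2 be invertible n×n integer matrices with A_1 − A_2 invertible, and define the operator T̃ on sequences b : ℤ^n → ℝ by (T̃ b)(j) = Σ_{i ∈ ℤ^n, i ≠ A_1 j, i ≠ A_2 j} b(i) / (|i − A_1 j|^{α_1} |i − A_2 j|^{α_2}) for j ≠ 0 and (T̃ b)(0) = 0. Then for every 1 ≤ p < ∞ there exists C > 0 such that for all b ∈ ℓ^p(ℤ^n) and all λ > 0, the cardinality #{j ∈ ℤ^n : |(T̃ b)(j)| > λ} ≤ (C ‖b‖_{ℓ^p(ℤ^n)} / λ)^p; that is, T̃ is bounded from ℓ^p(ℤ^n) into weak ℓ^{p,∞}(ℤ^n). -/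
open scoped ENNReal BigOperators Classical

noncomputable def Ttil {n : ℕ} (α1 α2 : ℝ) (A1 A2 : Matrix (Fin n) (Fin n) ℤ)
    (b : (Fin n → ℤ) → ℝ) (j : Fin n → ℤ) : ℝ≥0∞ :=
  if j ≠ 0 then
    ∑' i : Fin n → ℤ,
      if i ≠ A1.mulVec j ∧ i ≠ A2.mulVec j then
        ENNReal.ofReal (|b i| / (eucZ (i - A1.mulVec j) ^ α1 * eucZ (i - A2.mulVec j) ^ α2))
      else 0
  else 0


/-- weak type -/
def WT (n : ℕ) (p : ℝ) (K : (Fin n → ℤ) → (Fin n → ℤ) → ℝ≥0∞) : Prop :=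
  ∃ C : NNReal, ∀ (c : (Fin n → ℤ) → ℝ≥0∞) (lam : ℝ≥0∞), lam ≠ 0 → lam ≠ ⊤ →
    lam ^ p * (∑' j, if lam < ∑' i, K i j * c i then (1 : ℝ≥0∞) else 0) ≤ C * ∑' i, c i ^ p

lemma wt_mono {n : ℕ} {p : ℝ} (hp : 1 ≤ p) {K K' : (Fin n → ℤ) → (Fin n → ℤ) → ℝ≥0∞}
    (D : NNReal) (hD : 1 ≤ D) (h : ∀ i j, K i j ≤ D * K' i j) (hK : WT n p K') : WT n p K := by
  obtain ⟨C, hC⟩ := hK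
  refine ⟨D ^ p * C, fun c lam h0 ht => ?_⟩
  have hD0 : (D : ℝ≥0∞) ≠ 0 := by
    have : D ≠ 0 := (lt_of_lt_of_le one_pos hD).ne'
    exact_mod_cast this
  have hDt : (D : ℝ≥0∞) ≠ ⊤ := ENNReal.coe_ne_top
  have hp0 : 0 ≤ p := by linarith
  have key := hC c (lam / D) (ENNReal.div_ne_zero.2 ⟨h0, hDt⟩) (ENNReal.div_ne_top ht hD0)
  have e : lam ^ p = D ^ p * (lam / D) ^ p := by
    rw [← ENNReal.mul_rpow_of_nonneg _ _ hp0, ENNReal.mul_div_cancel hD0 hDt]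
  rw [e, mul_assoc]
  have : ((D ^ p * C : NNReal) : ℝ≥0∞) = (D : ℝ≥0∞) ^ p * C := by
    rw [ENNReal.coe_mul, ENNReal.coe_rpow_of_nonneg _ hp0]
  rw [this, mul_assoc]
  refine mul_le_mul_right (le_trans (mul_le_mul_right (ENNReal.tsum_le_tsum fun j => ?_) _) key) _
  by_cases hj : lam < ∑' i, K i j * c i
  · have : lam / D < ∑' i, K' i j * c i := by
      rw [ENNReal.div_lt_iff (Or.inl hD0) (Or.inl hDt)]
      refine hj.trans_le ?_
      rw [← ENNReal.tsum_mul_right]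
      refine ENNReal.tsum_le_tsum fun i => ?_
      calc _ ≤ D * K' i j * c i := by gcongr; exact h i j
        _ = _ := by ring
    simp [this, hj]
  · simp [hj]

lemma wt_add {n : ℕ} {p : ℝ} (hp : 1 ≤ p) {K K' : (Fin n → ℤ) → (Fin n → ℤ) → ℝ≥0∞}
    (hK : WT n p K) (hK' : WT n p K') : WT n p (fun i j => K i j + K' i j) := by
  obtain ⟨C, hC⟩ := hK
  obtain ⟨C', hC'⟩ := hK'
  have hp0 : 0 ≤ p := by linarith
  refine ⟨2 ^ p * (C + C'), fun c lam h0 ht => ?_⟩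
  have a1 := hC c (lam / 2) (ENNReal.div_ne_zero.2 ⟨h0, by simp⟩) (ENNReal.div_ne_top ht (by simp))
  have a2 := hC' c (lam / 2) (ENNReal.div_ne_zero.2 ⟨h0, by simp⟩) (ENNReal.div_ne_top ht (by simp))
  have e : lam ^ p = 2 ^ p * (lam / 2) ^ p := by
    rw [← ENNReal.mul_rpow_of_nonneg _ _ hp0, ENNReal.mul_div_cancel (by simp) (by simp)]
  have : ((2 ^ p * (C + C') : NNReal) : ℝ≥0∞) = (2 : ℝ≥0∞) ^ p * (C + C') := by
    rw [ENNReal.coe_mul, ENNReal.coe_rpow_of_nonneg _ hp0]; simp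
  rw [e, this, mul_assoc, mul_assoc, add_mul]
  refine mul_le_mul_right (le_trans ?_ (add_le_add a1 a2)) _
  rw [← mul_add, ← ENNReal.tsum_add]
  refine mul_le_mul_right (ENNReal.tsum_le_tsum fun j => ?_) _
  by_cases hj : lam < ∑' i, (K i j + K' i j) * c i
  · by_cases h1 : lam / 2 < ∑' i, K i j * c i
    · simp only [hj, h1, if_true]; exact le_self_add
    by_cases h2 : lam / 2 < ∑' i, K' i j * c i
    · simp only [hj, h2, if_true]; exact le_add_self
    exfalso
    push Not at h1 h2
    have := add_le_add h1 h2
    rw [ENNReal.add_halves, ← ENNReal.tsum_add] at this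
    simp only [add_mul] at hj
    exact absurd hj (not_lt.2 this)
  · simp [hj]

lemma tsum_weight {ι : Type*} {p : ℝ} (hp : 1 ≤ p) (w f : ι → ℝ≥0∞) :
    (∑' i, w i * f i) ^ p ≤ (∑' i, w i) ^ (p - 1) * ∑' i, w i * f i ^ p := by
  have hp0 : 0 < p := by linarith
  rw [← ENNReal.le_rpow_inv_iff hp0]
  refine (ENNReal.tsum_eq_iSup_sum (f := fun i => w i * f i)).trans_le <| iSup_le fun s => ?_
  refine (ENNReal.inner_le_weight_mul_Lp_of_nonneg s hp w f).trans ?_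
  rw [ENNReal.mul_rpow_of_nonneg _ _ (by positivity), ← ENNReal.rpow_mul]
  have : (p - 1) * p⁻¹ = 1 - p⁻¹ := by field_simp
  rw [this]
  have : 0 ≤ 1 - p⁻¹ := by
    have := inv_le_one_of_one_le₀ hp
    linarith
  gcongr
  · exact ENNReal.sum_le_tsum s
  · exact ENNReal.sum_le_tsum s

lemma wt_schur {n : ℕ} {p : ℝ} (hp : 1 ≤ p) {K : (Fin n → ℤ) → (Fin n → ℤ) → ℝ≥0∞}
    (C : NNReal) (h1 : ∀ j, ∑' i, K i j ≤ C) (h2 : ∀ i, ∑' j, K i j ≤ C) : WT n p K := by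
  have hp0 : 0 ≤ p := by linarith
  refine ⟨C ^ (p - 1) * C, fun c lam h0 ht => ?_⟩
  rw [ENNReal.coe_mul, ENNReal.coe_rpow_of_nonneg _ (by linarith), ← ENNReal.tsum_mul_left]
  calc _ ≤ ∑' j, (C : ℝ≥0∞) ^ (p - 1) * ∑' i, K i j * c i ^ p := by
        refine ENNReal.tsum_le_tsum fun j => ?_
        by_cases hj : lam < ∑' i, K i j * c i
        · simp only [hj, if_true, mul_one]
          calc lam ^ p ≤ (∑' i, K i j * c i) ^ p := by gcongr
            _ ≤ _ := tsum_weight hp _ _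
            _ ≤ _ := by
              refine mul_le_mul_left (ENNReal.rpow_le_rpow (h1 j) (by linarith)) _
        · simp [hj]
    _ = (C : ℝ≥0∞) ^ (p - 1) * ∑' i, (∑' j, K i j) * c i ^ p := by
        rw [ENNReal.tsum_mul_left, ENNReal.tsum_comm]
        simp_rw [ENNReal.tsum_mul_right]
    _ ≤ (C : ℝ≥0∞) ^ (p - 1) * ∑' i, C * c i ^ p := by
        gcongr with i
        exact h2 i
    _ = _ := by rw [ENNReal.tsum_mul_left, mul_assoc]

lemma count_le {n : ℕ} (R : ℝ) (hR : 1 ≤ R) :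
    (∑' k : Fin n → ℤ, if ‖k‖ ≤ R then (1 : ℝ≥0∞) else 0) ≤ ENNReal.ofReal ((3 * R) ^ n) := by
  have hsub : ∀ k : Fin n → ℤ, ‖k‖ ≤ R → k ∈ Finset.Icc (fun _ : Fin n => -⌊R⌋) (fun _ => ⌊R⌋) := by
    intro k hk
    rw [Finset.mem_Icc]
    have : ∀ t, |k t| ≤ ⌊R⌋ := fun t => by
      rw [Int.le_floor]
      have := (norm_le_pi_norm k t).trans hk
      rwa [Int.norm_eq_abs, ← Int.cast_abs] at this
    exact ⟨fun t => (abs_le.1 (this t)).1, fun t => (abs_le.1 (this t)).2⟩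
  rw [tsum_eq_sum (s := Finset.Icc (fun _ : Fin n => -⌊R⌋) (fun _ => ⌊R⌋))]
  · calc _ ≤ ∑ k ∈ Finset.Icc (fun _ : Fin n => -⌊R⌋) (fun _ => ⌊R⌋), (1 : ℝ≥0∞) := by
          refine Finset.sum_le_sum fun k _ => ?_
          split_ifs <;> simp
      _ = ENNReal.ofReal ((Finset.Icc (fun _ : Fin n => -⌊R⌋) (fun _ => ⌊R⌋)).card : ℝ) := by simp
      _ ≤ _ := by
        apply ENNReal.ofReal_le_ofReal
        rw [Pi.card_Icc]
        simp only [Int.card_Icc, Finset.prod_const, Finset.card_univ, Fintype.card_fin]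
        push_cast
        gcongr
        have h1 : 0 ≤ ⌊R⌋ := Int.floor_nonneg.2 (by linarith)
        have h2 : (((⌊R⌋ + 1 - -⌊R⌋).toNat : ℤ) : ℝ) = 2 * ⌊R⌋ + 1 := by
          rw [Int.toNat_of_nonneg (by omega)]; push_cast; ring
        rw [Int.cast_natCast] at h2
        rw [h2]
        have := Int.floor_le R
        linarith
  · intro k hk
    have : ¬ ‖k‖ ≤ R := fun h => hk (hsub k h)
    simp [this]

lemma mulVec_bound {n : ℕ} (A : Matrix (Fin n) (Fin n) ℤ) :
    ∃ a : ℝ, 1 ≤ a ∧ ∀ v, ‖A.mulVec v‖ ≤ a * ‖v‖ := by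
  let _ := Matrix.linftyOpNormedAddCommGroup (m := Fin n) (n := Fin n) (α := ℤ)
  refine ⟨‖A‖ + 1, by linarith [norm_nonneg A], fun v => ?_⟩
  have := Matrix.linfty_opNorm_mulVec A v
  nlinarith [norm_nonneg v]

lemma mulVec_bound_below {n : ℕ} (A : Matrix (Fin n) (Fin n) ℤ) (hA : A.det ≠ 0) :
    ∃ a : ℝ, 1 ≤ a ∧ ∀ v, ‖v‖ ≤ a * ‖A.mulVec v‖ := by
  obtain ⟨a, ha, h⟩ := mulVec_bound A.adjugate
  refine ⟨a, ha, fun v => ?_⟩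
  have e : A.adjugate.mulVec (A.mulVec v) = A.det • v := by
    rw [Matrix.mulVec_mulVec, Matrix.adjugate_mul, Matrix.smul_mulVec, Matrix.one_mulVec]
  refine le_trans ?_ (h _)
  rw [e, pi_norm_le_iff_of_nonneg (norm_nonneg _)]
  intro t
  refine le_trans ?_ (norm_le_pi_norm _ t)
  simp only [Pi.smul_apply, smul_eq_mul, norm_mul]
  have : 1 ≤ ‖A.det‖ := by
    rw [Int.norm_eq_abs, ← Int.cast_abs]
    exact_mod_cast Int.one_le_abs hA
  nlinarith [norm_nonneg (v t)]

lemma one_le_norm {n : ℕ} (k : Fin n → ℤ) (hk : k ≠ 0) : 1 ≤ ‖k‖ := by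
  obtain ⟨t, ht⟩ := Function.ne_iff.1 hk
  refine le_trans ?_ (norm_le_pi_norm k t)
  rw [Int.norm_eq_abs, ← Int.cast_abs]
  exact_mod_cast Int.one_le_abs ht

lemma norm_le_eucZ {n : ℕ} (k : Fin n → ℤ) : ‖k‖ ≤ eucZ k := by
  unfold eucZ
  rw [pi_norm_le_iff_of_nonneg (Real.sqrt_nonneg _)]
  intro t
  rw [Int.norm_eq_abs]
  apply Real.le_sqrt_of_sq_le
  rw [sq_abs]
  exact Finset.single_le_sum (f := fun t => ((k t : ℝ)) ^ 2) (fun _ _ => sq_nonneg _) (Finset.mem_univ t)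

lemma geo_two_sided (q : ℝ) (hq0 : 0 < q) (hq1 : q < 1) (r : ℕ) :
    ∑' t : ℕ, ENNReal.ofReal (q ^ ((r - t) + (t - r))) ≤ ENNReal.ofReal (2 / (1 - q)) := by
  have hg : ∑' t : ℕ, ENNReal.ofReal (q ^ t) = ENNReal.ofReal (1 / (1 - q)) := by
    rw [← ENNReal.ofReal_tsum_of_nonneg (fun t => by positivity)
      (summable_geometric_of_lt_one hq0.le hq1), tsum_geometric_of_lt_one hq0.le hq1, one_div]
  have h1q : 0 < 1 - q := by linarith
  set f : ℕ → ℝ≥0∞ := fun t => ENNReal.ofReal (q ^ ((r - t) + (t - r))) with hf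
  have hsplit : ∑' t, f t = ∑ t ∈ Finset.range r, f t + ∑' t, f (t + r) :=
    (ENNReal.summable.sum_add_tsum_nat_add' (f := f) (k := r)).symm
  have h2 : (2 : ℝ) / (1 - q) = 1 / (1 - q) + 1 / (1 - q) := by ring
  have hpos : 0 ≤ 1 / (1 - q) := by positivity
  have hA : ∑ t ∈ Finset.range r, f t ≤ ∑' t : ℕ, ENNReal.ofReal (q ^ t) := by
    rw [← Finset.sum_range_reflect]
    refine le_trans (Finset.sum_le_sum fun j hj => ?_) (ENNReal.sum_le_tsum (Finset.range r))
    apply ENNReal.ofReal_le_ofReal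
    rw [Finset.mem_range] at hj
    apply pow_le_pow_of_le_one hq0.le hq1.le
    omega
  have hB : ∑' t, f (t + r) ≤ ∑' t : ℕ, ENNReal.ofReal (q ^ t) := by
    refine ENNReal.tsum_le_tsum fun t => ?_
    apply ENNReal.ofReal_le_ofReal
    apply pow_le_pow_of_le_one hq0.le hq1.le
    omega
  rw [hsplit, h2, ENNReal.ofReal_add hpos hpos, ← hg]
  exact add_le_add hA hB

lemma two_pow_rpow (s : ℕ) (x : ℝ) : ((2 : ℝ) ^ s) ^ x = ((2 : ℝ) ^ x) ^ s := by
  rw [← Real.rpow_natCast, ← Real.rpow_natCast, ← Real.rpow_mul (by norm_num),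
    ← Real.rpow_mul (by norm_num), mul_comm]

lemma dyadic_term (N α γ : ℝ) (q : ℝ)
    (hq1 : (2 : ℝ) ^ (-(N - α)) ≤ q) (hq2 : (2 : ℝ) ^ (N - α - γ) ≤ q) (r t : ℕ) :
    ((2 : ℝ) ^ t) ^ N * (((2 : ℝ) ^ t) ^ (-α) * (max ((2 : ℝ) ^ t) (2 ^ r)) ^ (-γ)) ≤
      ((2 : ℝ) ^ r) ^ (N - α - γ) * q ^ ((r - t) + (t - r)) := by
  rcases le_total t r with h | h
  · obtain ⟨s, rfl⟩ := Nat.exists_eq_add_of_le h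
    have e : (t + s - t) + (t - (t + s)) = s := by omega
    rw [e, max_eq_right (pow_le_pow_right₀ (by norm_num) h)]
    calc _ = ((2 : ℝ) ^ (t + s)) ^ (N - α - γ) * ((2 : ℝ) ^ (-(N - α))) ^ s := by
          rw [← two_pow_rpow, pow_add, Real.mul_rpow (by positivity) (by positivity),
            Real.mul_rpow (by positivity) (by positivity)]
          have e1 : N - α - γ = N + (-α) + (-γ) := by ring
          have e2 : ((2 : ℝ) ^ s) ^ (-γ) = ((2 : ℝ) ^ s) ^ (N - α - γ) * ((2 : ℝ) ^ s) ^ (-(N - α)) := by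
            rw [← Real.rpow_add (by positivity)]; congr 1; ring
          rw [e2, e1, Real.rpow_add (x := (2 : ℝ) ^ t) (by positivity),
            Real.rpow_add (x := (2 : ℝ) ^ t) (by positivity)]
          ring
      _ ≤ _ := by gcongr
  · obtain ⟨s, rfl⟩ := Nat.exists_eq_add_of_le h
    have e : (r - (r + s)) + (r + s - r) = s := by omega
    rw [e, max_eq_left (pow_le_pow_right₀ (by norm_num) h)]
    calc _ = ((2 : ℝ) ^ r) ^ (N - α - γ) * ((2 : ℝ) ^ (N - α - γ)) ^ s := by
          rw [← two_pow_rpow, ← Real.mul_rpow (by positivity) (by positivity), ← pow_add,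
            ← Real.rpow_add (by positivity), ← Real.rpow_add (by positivity)]
          congr 1; ring
      _ ≤ _ := by gcongr

lemma sum_lem (n : ℕ) (α γ : ℝ) (hα : 0 ≤ α) (hαn : α < n) (hγ : 0 ≤ γ) (hs : n < α + γ) :
    ∃ C : ℝ, 0 < C ∧ ∀ R : ℝ, 1 ≤ R →
      (∑' k : Fin n → ℤ, if k ≠ 0 then ENNReal.ofReal (‖k‖ ^ (-α) * (‖k‖ + R) ^ (-γ)) else 0)
        ≤ ENNReal.ofReal (C * R ^ ((n : ℝ) - α - γ)) := by
  set q : ℝ := max ((2 : ℝ) ^ (-((n : ℝ) - α))) ((2 : ℝ) ^ ((n : ℝ) - α - γ)) with hq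
  have hq0 : 0 < q := lt_max_of_lt_left (by positivity)
  have hq1 : q < 1 := max_lt (Real.rpow_lt_one_of_one_lt_of_neg (by norm_num) (by linarith))
    (Real.rpow_lt_one_of_one_lt_of_neg (by norm_num) (by linarith))
  have h1q : 0 < 1 - q := by linarith
  refine ⟨6 ^ n * (2 ^ (-((n : ℝ) - α - γ)) * (2 / (1 - q))), by positivity, fun R hR => ?_⟩
  obtain ⟨r, hr1, hr2⟩ := exists_nat_pow_near hR (by norm_num : (1 : ℝ) < 2)
  set g : ℕ → ℝ := fun t => ((2 : ℝ) ^ t) ^ (-α) * (max ((2 : ℝ) ^ t) (2 ^ r)) ^ (-γ) with hg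
  have hg0 : ∀ t, 0 ≤ g t := fun t => by positivity
  have hr0 : (0 : ℝ) < 2 ^ r := by positivity
  calc _ ≤ ∑' k : Fin n → ℤ, ∑' t : ℕ, (if ‖k‖ ≤ 2 ^ (t + 1) then (1 : ℝ≥0∞) else 0) * ENNReal.ofReal (g t) := by
        refine ENNReal.tsum_le_tsum fun k => ?_
        split_ifs with hk
        · obtain ⟨t, ht1, ht2⟩ := exists_nat_pow_near (one_le_norm k hk) (by norm_num : (1 : ℝ) < 2)
          refine le_trans ?_ (ENNReal.le_tsum t)
          simp only [ht2.le, if_true, one_mul]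
          apply ENNReal.ofReal_le_ofReal
          have ht0 : (0 : ℝ) < 2 ^ t := by positivity
          apply mul_le_mul
          · exact Real.rpow_le_rpow_of_nonpos ht0 ht1 (by linarith)
          · refine Real.rpow_le_rpow_of_nonpos (by positivity) (max_le ?_ ?_) (by linarith) <;> linarith
          · positivity
          · positivity
        · exact zero_le
    _ = ∑' t : ℕ, (∑' k : Fin n → ℤ, if ‖k‖ ≤ 2 ^ (t + 1) then (1 : ℝ≥0∞) else 0) * ENNReal.ofReal (g t) := by
        rw [ENNReal.tsum_comm]
        simp_rw [ENNReal.tsum_mul_right]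
    _ ≤ ∑' t : ℕ, ENNReal.ofReal (6 ^ n * ((2 : ℝ) ^ r) ^ ((n : ℝ) - α - γ)) * ENNReal.ofReal (q ^ ((r - t) + (t - r))) := by
        refine ENNReal.tsum_le_tsum fun t => ?_
        refine (mul_le_mul_left (count_le _ (one_le_pow₀ (by norm_num))) _).trans ?_
        rw [← ENNReal.ofReal_mul (by positivity), ← ENNReal.ofReal_mul (by positivity)]
        apply ENNReal.ofReal_le_ofReal
        have := dyadic_term n α γ q (le_max_left _ _) (le_max_right _ _) r t
        rw [Real.rpow_natCast] at this
        calc _ = 6 ^ n * ((2 ^ t) ^ n * g t) := by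
              
              have e6 : (3 * (2 : ℝ) ^ (t + 1)) = 6 * 2 ^ t := by ring
              rw [e6, mul_pow, mul_assoc]
          _ ≤ 6 ^ n * (((2 : ℝ) ^ r) ^ ((n : ℝ) - α - γ) * q ^ ((r - t) + (t - r))) := by gcongr
          _ = _ := by ring
    _ ≤ ENNReal.ofReal (6 ^ n * ((2 : ℝ) ^ r) ^ ((n : ℝ) - α - γ)) * ENNReal.ofReal (2 / (1 - q)) := by
        rw [ENNReal.tsum_mul_left]
        exact mul_le_mul_right (geo_two_sided q hq0 hq1 r) _
    _ ≤ _ := by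
        rw [← ENNReal.ofReal_mul (by positivity)]
        apply ENNReal.ofReal_le_ofReal
        have : ((2 : ℝ) ^ r) ^ ((n : ℝ) - α - γ) ≤ 2 ^ (-((n : ℝ) - α - γ)) * R ^ ((n : ℝ) - α - γ) := by
          calc _ ≤ (R / 2) ^ ((n : ℝ) - α - γ) :=
                Real.rpow_le_rpow_of_nonpos (by positivity) (by rw [pow_succ] at hr2; linarith) (by linarith)
            _ = _ := by
              rw [Real.div_rpow (by linarith) (by norm_num), Real.rpow_neg (by norm_num)]
              field_simp
        calc _ ≤ 6 ^ n * (2 ^ (-((n : ℝ) - α - γ)) * R ^ ((n : ℝ) - α - γ)) * (2 / (1 - q)) := by gcongr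
          _ = _ := by ring

lemma far_sum (n : ℕ) (hn : 1 ≤ n) (s : ℝ) (hs : 0 < s) :
    ∃ C : ℝ, 0 < C ∧ ∀ R : ℝ, 1 ≤ R →
      (∑' k : Fin n → ℤ, ENNReal.ofReal ((‖k‖ + R) ^ (-((n : ℝ) + s))))
        ≤ ENNReal.ofReal (C * R ^ (-s)) := by
  have hn' : (0 : ℝ) < n := by exact_mod_cast hn
  obtain ⟨C, hC, h⟩ := sum_lem n 0 (n + s) le_rfl hn' (by linarith) (by linarith)
  refine ⟨C + 1, by linarith, fun R hR => ?_⟩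
  have hR0 : 0 < R := by linarith
  have h := h R hR
  have e : (n : ℝ) - 0 - (n + s) = -s := by ring
  rw [e] at h
  calc _ ≤ ∑' k : Fin n → ℤ, ((if k ≠ 0 then ENNReal.ofReal (‖k‖ ^ (-(0 : ℝ)) * (‖k‖ + R) ^ (-((n : ℝ) + s))) else 0)
          + if k = 0 then ENNReal.ofReal (R ^ (-s)) else 0) := by
        refine ENNReal.tsum_le_tsum fun k => ?_
        by_cases hk : k = 0
        · subst hk
          simp only [norm_zero, zero_add, ne_eq, not_true_eq_false, if_false, if_true]
          apply ENNReal.ofReal_le_ofReal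
          exact Real.rpow_le_rpow_of_exponent_le hR (by linarith)
        · simp [hk]
    _ ≤ ENNReal.ofReal (C * R ^ (-s)) + ENNReal.ofReal (R ^ (-s)) := by
        rw [ENNReal.tsum_add, tsum_ite_eq]
        gcongr
    _ = _ := by
        rw [← ENNReal.ofReal_add (by positivity) (by positivity)]
        congr 1; ring

lemma count_far {n : ℕ} (hn : 1 ≤ n) (D : ℝ) (hD : 0 < D) (X L : ℝ≥0∞) (hL0 : L ≠ 0) (hLt : L ≠ ⊤) :
    L * (∑' j : Fin n → ℤ, if j ≠ 0 ∧ L ≤ ENNReal.ofReal (D * ‖j‖ ^ (-(n : ℝ))) * X then (1 : ℝ≥0∞) else 0)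
      ≤ ENNReal.ofReal (3 ^ n * D) * X := by
  by_cases hX : X = ⊤
  · subst hX
    rw [ENNReal.mul_top (by rw [ne_eq, ENNReal.ofReal_eq_zero, not_le]; positivity)]
    exact le_top
  lift X to NNReal using hX
  lift L to NNReal using hLt
  have hL : (0 : ℝ) < L := by
    have : L ≠ 0 := by exact_mod_cast hL0
    positivity
  set Q : ℝ := D * X / L with hQ
  have hQ0 : 0 ≤ Q := by positivity
  have hn0 : (n : ℝ) ≠ 0 := by positivity
  have key : ∀ j : Fin n → ℤ, j ≠ 0 → (L : ℝ≥0∞) ≤ ENNReal.ofReal (D * ‖j‖ ^ (-(n : ℝ))) * X → ‖j‖ ^ n ≤ Q := by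
    intro j hj h
    have hj1 : 0 < ‖j‖ := norm_pos_iff.2 hj
    rw [← ENNReal.ofReal_coe_nnreal, ← ENNReal.ofReal_coe_nnreal, ← ENNReal.ofReal_mul (by positivity),
      ENNReal.ofReal_le_ofReal_iff (by positivity), Real.rpow_neg hj1.le, Real.rpow_natCast] at h
    rw [hQ, le_div_iff₀ hL]
    have hjn : 0 < ‖j‖ ^ n := by positivity
    calc _ ≤ ‖j‖ ^ n * (D * (‖j‖ ^ n)⁻¹ * X) := by gcongr
      _ = _ := by field_simp
  by_cases hQ1 : Q < 1
  · have : ∀ j : Fin n → ℤ, ¬ (j ≠ 0 ∧ (L : ℝ≥0∞) ≤ ENNReal.ofReal (D * ‖j‖ ^ (-(n : ℝ))) * X) := by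
      rintro j ⟨hj, h⟩
      have h1 := key j hj h
      have h2 : 1 ≤ ‖j‖ ^ n := one_le_pow₀ (one_le_norm j hj)
      linarith
    simp only [this, if_false, tsum_zero, mul_zero]
    exact zero_le
  push Not at hQ1
  calc _ ≤ (L : ℝ≥0∞) * (∑' j : Fin n → ℤ, if ‖j‖ ≤ Q ^ ((n : ℝ)⁻¹) then (1 : ℝ≥0∞) else 0) := by
        gcongr with j
        split_ifs with h h'
        · exact le_rfl
        · exfalso; apply h'
          rw [Real.le_rpow_inv_iff_of_pos (norm_nonneg _) hQ0 (by positivity), Real.rpow_natCast]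
          exact key j h.1 h.2
        · exact zero_le
        · exact le_rfl
    _ ≤ L * ENNReal.ofReal ((3 * Q ^ ((n : ℝ)⁻¹)) ^ n) := by
        gcongr
        exact count_le _ (Real.one_le_rpow hQ1 (by positivity))
    _ = _ := by
        rw [← ENNReal.ofReal_coe_nnreal, ← ENNReal.ofReal_coe_nnreal, ← ENNReal.ofReal_mul (by positivity),
          ← ENNReal.ofReal_mul (by positivity), mul_pow, ← Real.rpow_natCast (Q ^ _),
          Real.rpow_inv_rpow hQ0 hn0, hQ]
        congr 1; field_simp

lemma wt_far {n : ℕ} (hn : 1 ≤ n) {p : ℝ} (hp : 1 ≤ p) :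
    WT n p (fun i j => if j ≠ 0 then ENNReal.ofReal ((‖i‖ + ‖j‖) ^ (-(n : ℝ))) else 0) := by
  have hp0 : 0 < p := by linarith
  have hn' : (0 : ℝ) < n := by exact_mod_cast hn
  set s : ℝ := n / p with hs
  have hs0 : 0 < s := by positivity
  have hsp : s * p = n := by rw [hs]; field_simp
  obtain ⟨C, hC, h⟩ := far_sum n hn s hs0
  refine ⟨Real.toNNReal (3 ^ n * C ^ (p - 1)), fun c lam h0 ht => ?_⟩
  have hfin := count_far hn (C ^ (p - 1)) (by positivity) (∑' i, c i ^ p) (lam ^ p)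
    (by simp [h0, ht, hp0.le]) (by simp [h0, ht, hp0.le])
  refine le_trans ?_ hfin
  gcongr with j
  by_cases hj : j = 0
  · simp [hj]
  simp only [hj, ne_eq, not_false_eq_true, if_true, true_and]
  by_cases hlt : lam < ∑' i, ENNReal.ofReal ((‖i‖ + ‖j‖) ^ (-(n : ℝ))) * c i
  · rw [if_pos hlt, if_pos]
    have hj1 := one_le_norm j hj
    have hj0 : 0 < ‖j‖ := by linarith
    have hL : ∀ i : Fin n → ℤ, 0 < ‖i‖ + ‖j‖ := fun i => by positivity
    calc lam ^ p ≤ (∑' i, ENNReal.ofReal ((‖i‖ + ‖j‖) ^ (-(n : ℝ))) * c i) ^ p := by gcongr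
      _ = (∑' i, ENNReal.ofReal ((‖i‖ + ‖j‖) ^ (-((n : ℝ) + s))) * (ENNReal.ofReal ((‖i‖ + ‖j‖) ^ s) * c i)) ^ p := by
          congr 2; ext i
          rw [← mul_assoc, ← ENNReal.ofReal_mul (by positivity), ← Real.rpow_add (hL i)]
          congr 3; ring
      _ ≤ _ := tsum_weight hp _ _
      _ ≤ (ENNReal.ofReal (C * ‖j‖ ^ (-s))) ^ (p - 1) * ∑' i, ENNReal.ofReal (‖j‖ ^ (-s)) * c i ^ p := by
          refine mul_le_mul' (ENNReal.rpow_le_rpow (h _ hj1) (by linarith)) ?_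
          refine ENNReal.tsum_le_tsum fun i => ?_
          rw [ENNReal.mul_rpow_of_nonneg _ _ hp0.le, ← mul_assoc, ENNReal.ofReal_rpow_of_pos (by positivity),
            ← ENNReal.ofReal_mul (by positivity), ← Real.rpow_mul (hL i).le, ← Real.rpow_add (hL i), hsp]
          gcongr
          have e : -((n : ℝ) + s) + n = -s := by ring
          rw [e]
          exact Real.rpow_le_rpow_of_nonpos hj0 (by linarith [norm_nonneg i]) (by linarith)
      _ = _ := by
          rw [ENNReal.tsum_mul_left, ← mul_assoc, ENNReal.ofReal_rpow_of_pos (by positivity),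
            ← ENNReal.ofReal_mul (by positivity), Real.mul_rpow (by positivity) (by positivity),
            mul_assoc, ← Real.rpow_mul hj0.le, ← Real.rpow_add hj0]
          congr 4
          rw [← hsp]; ring
  · rw [if_neg hlt]; exact zero_le

lemma near_pt {α β u R L E : ℝ} (hβ : 0 < β) (hu : 0 < u) (hR : 1 ≤ R) (hRL : R ≤ L)
    (hE : L ≤ E * R) (huL : u ≤ L) :
    u ^ (-α) * L ^ (-β) ≤ 2 ^ (β + 1) * E * R * (u ^ (-α) * (u + R) ^ (-(β + 1))) := by
  have hR0 : 0 < R := by linarith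
  have hL0 : 0 < L := by linarith
  have hE0 : 0 < E := by
    by_contra h
    push Not at h
    nlinarith
  have h1 : (2 * L) ^ (-(β + 1)) ≤ (u + R) ^ (-(β + 1)) :=
    Real.rpow_le_rpow_of_nonpos (by linarith) (by linarith) (by linarith)
  have h2 : L ^ (-β) = 2 ^ (β + 1) * L * (2 * L) ^ (-(β + 1)) := by
    rw [Real.mul_rpow (by norm_num) hL0.le, Real.rpow_neg (by norm_num : (0 : ℝ) ≤ 2), neg_add,
      Real.rpow_add hL0, Real.rpow_neg_one]
    field_simp
  have h3 : 0 < u ^ (-α) := by positivity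
  calc _ = u ^ (-α) * (2 ^ (β + 1) * L * (2 * L) ^ (-(β + 1))) := by rw [h2]
    _ ≤ u ^ (-α) * (2 ^ (β + 1) * (E * R) * (u + R) ^ (-(β + 1))) := by gcongr
    _ = _ := by ring

lemma wt_near {n : ℕ} {p : ℝ} (hp : 1 ≤ p) (α β : ℝ) (hα : 0 < α) (hβ : 0 < β)
    (hab : α + β = n) (A : Matrix (Fin n) (Fin n) ℤ) (hA : A.det ≠ 0) :
    ∃ ε : ℝ, 0 < ε ∧ 
    WT n p (fun i j => if j ≠ 0 ∧ i ≠ A.mulVec j ∧ ‖i - A.mulVec j‖ < ε * (‖i‖ + ‖j‖) then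
      ENNReal.ofReal (‖i - A.mulVec j‖ ^ (-α) * (‖i‖ + ‖j‖) ^ (-β)) else 0) := by
  obtain ⟨a, ha, hau⟩ := mulVec_bound A
  obtain ⟨a', ha', hal⟩ := mulVec_bound_below A hA
  obtain ⟨C, hC, h⟩ := sum_lem n α (β + 1) hα.le (by linarith) (by linarith) (by linarith)
  set E : ℝ := 2 + 2 * a + 2 * a' with hE
  have hE0 : 0 < E := by linarith
  have bounds : ∀ i j : Fin n → ℤ, ‖i - A.mulVec j‖ < 1 / (2 * a') * (‖i‖ + ‖j‖) →
      ‖i - A.mulVec j‖ ≤ ‖i‖ + ‖j‖ ∧ ‖i‖ + ‖j‖ ≤ E * ‖j‖ ∧ ‖i‖ + ‖j‖ ≤ E * ‖i‖ := by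
    intro i j hij
    have hi := norm_nonneg i
    have hj := norm_nonneg j
    have t1 : ‖i‖ ≤ ‖i - A.mulVec j‖ + ‖A.mulVec j‖ := by
      simpa using norm_add_le (i - A.mulVec j) (A.mulVec j)
    have t2 : ‖A.mulVec j‖ ≤ ‖i‖ + ‖i - A.mulVec j‖ := by
      simpa using norm_sub_le i (i - A.mulVec j)
    have t3 := hau j
    have t4 := hal j
    have hu := norm_nonneg (i - A.mulVec j)
    generalize ‖i - A.mulVec j‖ = u at *
    have t5 : a' * u ≤ (‖i‖ + ‖j‖) / 2 := by
      calc a' * u ≤ a' * (1 / (2 * a') * (‖i‖ + ‖j‖)) := by gcongr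
        _ = _ := by field_simp
    have t6 : u ≤ (‖i‖ + ‖j‖) / 2 := by nlinarith
    refine ⟨by linarith, by nlinarith, ?_⟩
    have : ‖j‖ ≤ a' * ‖i‖ + a' * u := by nlinarith
    nlinarith
  refine ⟨1 / (2 * a'), by positivity, wt_schur hp (Real.toNNReal (2 ^ (β + 1) * E * C)) ?_ ?_⟩
  · intro j
    by_cases hj : j = 0
    · simp [hj]
    have hj1 := one_le_norm j hj
    have hj0 : 0 < ‖j‖ := by linarith
    calc _ ≤ ∑' i, ENNReal.ofReal (2 ^ (β + 1) * E * ‖j‖) * (fun k : Fin n → ℤ => if k ≠ 0 then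
          ENNReal.ofReal (‖k‖ ^ (-α) * (‖k‖ + ‖j‖) ^ (-(β + 1))) else 0) (i - A.mulVec j) := by
          refine ENNReal.tsum_le_tsum fun i => ?_
          split_ifs with hc
          · obtain ⟨_, hne, hlt⟩ := hc
            obtain ⟨b1, b2, b3⟩ := bounds i j hlt
            have hk : i - A.mulVec j ≠ 0 := sub_ne_zero.2 hne
            simp only [hk, ne_eq, not_false_eq_true, if_true]
            rw [← ENNReal.ofReal_mul (by positivity)]
            apply ENNReal.ofReal_le_ofReal
            exact near_pt hβ (norm_pos_iff.2 hk) hj1 (by linarith [norm_nonneg i]) b2 b1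
          · exact zero_le
      _ = ENNReal.ofReal (2 ^ (β + 1) * E * ‖j‖) * ∑' k : Fin n → ℤ, (if k ≠ 0 then
          ENNReal.ofReal (‖k‖ ^ (-α) * (‖k‖ + ‖j‖) ^ (-(β + 1))) else 0) := by
          rw [ENNReal.tsum_mul_left]
          congr 1
          exact (Equiv.subRight (A.mulVec j)).tsum_eq (fun k : Fin n → ℤ => if k ≠ 0 then
            ENNReal.ofReal (‖k‖ ^ (-α) * (‖k‖ + ‖j‖) ^ (-(β + 1))) else 0)
      _ ≤ ENNReal.ofReal (2 ^ (β + 1) * E * ‖j‖) * ENNReal.ofReal (C * ‖j‖ ^ ((n : ℝ) - α - (β + 1))) := by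
          gcongr
          exact h _ hj1
      _ = ENNReal.ofReal (2 ^ (β + 1) * E * C) := by
          rw [← ENNReal.ofReal_mul (by positivity)]
          congr 1
          have e : (n : ℝ) - α - (β + 1) = -1 := by linarith
          rw [e, Real.rpow_neg_one]
          field_simp
  · intro i
    by_cases hi : i = 0
    · have : ∀ j : Fin n → ℤ, ¬ (j ≠ 0 ∧ i ≠ A.mulVec j ∧ ‖i - A.mulVec j‖ < 1 / (2 * a') * (‖i‖ + ‖j‖)) := by
        rintro j ⟨hj, _, hlt⟩
        obtain ⟨_, _, b3⟩ := bounds i j hlt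
        have := norm_pos_iff.2 hj
        simp [hi] at b3
        exact hj b3
      simp only [this, if_false, tsum_zero]
      exact zero_le
    have hi1 := one_le_norm i hi
    have hi0 : 0 < ‖i‖ := by linarith
    have hinj : Function.Injective (fun j : Fin n → ℤ => i - A.mulVec j) := by
      intro x y hxy
      have h1 : A.mulVec x = A.mulVec y := by simpa using hxy
      have h2 := hal (x - y)
      rw [Matrix.mulVec_sub, h1, sub_self, norm_zero, mul_zero] at h2
      exact sub_eq_zero.1 (norm_le_zero_iff.1 h2)
    calc _ ≤ ∑' j, ENNReal.ofReal (2 ^ (β + 1) * E * ‖i‖) * (fun k : Fin n → ℤ => if k ≠ 0 then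
          ENNReal.ofReal (‖k‖ ^ (-α) * (‖k‖ + ‖i‖) ^ (-(β + 1))) else 0) (i - A.mulVec j) := by
          refine ENNReal.tsum_le_tsum fun j => ?_
          split_ifs with hc
          · obtain ⟨_, hne, hlt⟩ := hc
            obtain ⟨b1, b2, b3⟩ := bounds i j hlt
            have hk : i - A.mulVec j ≠ 0 := sub_ne_zero.2 hne
            simp only [hk, ne_eq, not_false_eq_true, if_true]
            rw [← ENNReal.ofReal_mul (by positivity)]
            apply ENNReal.ofReal_le_ofReal
            exact near_pt hβ (norm_pos_iff.2 hk) hi1 (by linarith [norm_nonneg j]) b3 b1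
          · exact zero_le
      _ ≤ ENNReal.ofReal (2 ^ (β + 1) * E * ‖i‖) * ∑' k : Fin n → ℤ, (if k ≠ 0 then
          ENNReal.ofReal (‖k‖ ^ (-α) * (‖k‖ + ‖i‖) ^ (-(β + 1))) else 0) := by
          rw [ENNReal.tsum_mul_left]
          refine mul_le_mul_right ?_ _
          exact ENNReal.tsum_comp_le_tsum_of_injective hinj (fun k : Fin n → ℤ => if k ≠ 0 then
            ENNReal.ofReal (‖k‖ ^ (-α) * (‖k‖ + ‖i‖) ^ (-(β + 1))) else 0)
      _ ≤ ENNReal.ofReal (2 ^ (β + 1) * E * ‖i‖) * ENNReal.ofReal (C * ‖i‖ ^ ((n : ℝ) - α - (β + 1))) := by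
          gcongr
          exact h _ hi1
      _ = ENNReal.ofReal (2 ^ (β + 1) * E * C) := by
          rw [← ENNReal.ofReal_mul (by positivity)]
          congr 1
          have e : (n : ℝ) - α - (β + 1) = -1 := by linarith
          rw [e, Real.rpow_neg_one]
          field_simp

lemma wt_S {n : ℕ} (hn : 1 ≤ n) {p : ℝ} (hp : 1 ≤ p) (α β : ℝ) (hα : 0 < α) (hβ : 0 < β)
    (hab : α + β = n) (A : Matrix (Fin n) (Fin n) ℤ) (hA : A.det ≠ 0) :
    WT n p (fun i j => if j ≠ 0 ∧ i ≠ A.mulVec j then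
      ENNReal.ofReal (‖i - A.mulVec j‖ ^ (-α) * (‖i‖ + ‖j‖) ^ (-β)) else 0) := by
  obtain ⟨ε, hε, hN⟩ := wt_near hp α β hα hβ hab A hA
  refine wt_mono hp (Real.toNNReal (1 + ε ^ (-α))) ?_ ?_ (wt_add hp hN (wt_far hn hp))
  · rw [Real.one_le_toNNReal]
    have : 0 < ε ^ (-α) := by positivity
    linarith
  · intro i j
    by_cases hc : j ≠ 0 ∧ i ≠ A.mulVec j
    · rw [if_pos hc]
      have hj0 : 0 < ‖j‖ := norm_pos_iff.2 hc.1
      have hL : 0 < ‖i‖ + ‖j‖ := by positivity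
      by_cases hlt : ‖i - A.mulVec j‖ < ε * (‖i‖ + ‖j‖)
      · rw [if_pos ⟨hc.1, hc.2, hlt⟩]
        refine le_trans le_self_add (le_mul_of_one_le_left zero_le ?_)
        change (1 : ℝ≥0∞) ≤ ENNReal.ofReal _
        rw [ENNReal.one_le_ofReal]
        have : 0 < ε ^ (-α) := by positivity
        linarith
      · rw [if_pos hc.1]
        push Not at hlt
        refine le_trans ?_ (mul_le_mul_right le_add_self _)
        change _ ≤ ENNReal.ofReal _ * ENNReal.ofReal _
        rw [← ENNReal.ofReal_mul (by positivity)]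
        apply ENNReal.ofReal_le_ofReal
        calc _ ≤ (ε * (‖i‖ + ‖j‖)) ^ (-α) * (‖i‖ + ‖j‖) ^ (-β) := by
              refine mul_le_mul_of_nonneg_right ?_ (by positivity)
              exact Real.rpow_le_rpow_of_nonpos (by positivity) hlt (by linarith)
          _ = ε ^ (-α) * (‖i‖ + ‖j‖) ^ (-(n : ℝ)) := by
              rw [Real.mul_rpow hε.le hL.le, mul_assoc, ← Real.rpow_add hL]
              congr 2; linarith
          _ ≤ _ := by
              refine mul_le_mul_of_nonneg_right (by linarith) (by positivity)
    · rw [if_neg hc]; exact zero_le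

lemma wt_T (n : ℕ) (hn : 1 ≤ n) (α1 α2 : ℝ) (h1 : 0 < α1) (h2 : 0 < α2)
    (hsum : α1 + α2 = n)
    (A1 A2 : Matrix (Fin n) (Fin n) ℤ) (hA1 : A1.det ≠ 0) (hA2 : A2.det ≠ 0)
    (hA12 : (A1 - A2).det ≠ 0) (p : ℝ) (hp : 1 ≤ p) :
    WT n p (fun i j => if j ≠ 0 ∧ i ≠ A1.mulVec j ∧ i ≠ A2.mulVec j then
      ENNReal.ofReal (1 / (eucZ (i - A1.mulVec j) ^ α1 * eucZ (i - A2.mulVec j) ^ α2)) else 0) := by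
  obtain ⟨a, ha, hau⟩ := mulVec_bound A1
  obtain ⟨d, hd, hdl⟩ := mulVec_bound_below (A1 - A2) hA12
  obtain ⟨a2, ha2, hau2⟩ := mulVec_bound A2
  set D : ℝ := 1 + 2 * (a + a2 + 1) * d with hD
  have hD1 : 1 ≤ D := by nlinarith
  have hD0 : 0 < D := by linarith
  refine wt_mono hp (Real.toNNReal (D ^ (n : ℝ))) ?_ ?_
    (wt_add hp (wt_S hn hp α1 α2 h1 h2 hsum A1 hA1) (wt_S hn hp α2 α1 h2 h1 (by linarith) A2 hA2))
  · rw [Real.one_le_toNNReal]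
    exact Real.one_le_rpow hD1 (by positivity)
  intro i j
  by_cases hc : j ≠ 0 ∧ i ≠ A1.mulVec j ∧ i ≠ A2.mulVec j
  swap
  · rw [if_neg hc]; exact zero_le
  rw [if_pos hc, if_pos ⟨hc.1, hc.2.1⟩, if_pos ⟨hc.1, hc.2.2⟩]
  have hj0 : 0 < ‖j‖ := norm_pos_iff.2 hc.1
  have hL : 0 < ‖i‖ + ‖j‖ := by positivity
  have hu : 0 < ‖i - A1.mulVec j‖ := norm_pos_iff.2 (sub_ne_zero.2 hc.2.1)
  have hv : 0 < ‖i - A2.mulVec j‖ := norm_pos_iff.2 (sub_ne_zero.2 hc.2.2)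
  have t0 : ‖j‖ ≤ d * (‖i - A1.mulVec j‖ + ‖i - A2.mulVec j‖) := by
    refine (hdl j).trans ?_
    gcongr
    rw [Matrix.sub_mulVec]
    have := norm_sub_le (i - A2.mulVec j) (i - A1.mulVec j)
    rw [sub_sub_sub_cancel_left] at this
    linarith
  have t1 : ‖i‖ ≤ ‖i - A1.mulVec j‖ + a * ‖j‖ := by
    have := norm_add_le (i - A1.mulVec j) (A1.mulVec j)
    rw [sub_add_cancel] at this
    linarith [hau j]
  have hK : 1 / (eucZ (i - A1.mulVec j) ^ α1 * eucZ (i - A2.mulVec j) ^ α2) ≤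
      ‖i - A1.mulVec j‖ ^ (-α1) * ‖i - A2.mulVec j‖ ^ (-α2) := by
    rw [Real.rpow_neg hu.le, Real.rpow_neg hv.le, ← mul_inv, ← one_div]
    have := norm_le_eucZ (i - A1.mulVec j)
    have := norm_le_eucZ (i - A2.mulVec j)
    gcongr
    exact Real.rpow_nonneg (Real.sqrt_nonneg _) _
  refine (ENNReal.ofReal_le_ofReal hK).trans ?_
  change _ ≤ ENNReal.ofReal _ * _
  generalize ‖i - A1.mulVec j‖ = u at *
  generalize ‖i - A2.mulVec j‖ = v at *
  generalize hLL : ‖i‖ + ‖j‖ = L at *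
  -- the pointwise estimate for the larger of the two distances
  have main : ∀ x α : ℝ, 0 < x → 0 < α → α ≤ n → L ≤ D * x → x ^ (-α) ≤ D ^ (n : ℝ) * L ^ (-α) := by
    intro x α hx hα hαn hLx
    calc x ^ (-α) ≤ (L / D) ^ (-α) :=
          Real.rpow_le_rpow_of_nonpos (by positivity) (by rw [div_le_iff₀ hD0]; linarith) (by linarith)
      _ = D ^ α * L ^ (-α) := by
          rw [Real.div_rpow hL.le hD0.le, Real.rpow_neg hD0.le, div_inv_eq_mul, mul_comm]
      _ ≤ _ := by
          gcongr
  have hj' : ‖j‖ ≥ 0 := hj0.le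
  rcases le_total u v with huv | huv
  · have hLv : L ≤ D * v := by
      have e1 : ‖j‖ ≤ 2 * d * v := by nlinarith
      have : a2 * (d * v) ≥ 0 := by positivity
      nlinarith
    refine le_trans ?_ (mul_le_mul_right le_self_add _)
    rw [← ENNReal.ofReal_mul (by positivity)]
    apply ENNReal.ofReal_le_ofReal
    calc _ ≤ u ^ (-α1) * (D ^ (n : ℝ) * L ^ (-α2)) := by
          gcongr; exact main v α2 hv h2 (by linarith) hLv
      _ = _ := by ring
  · have hLu : L ≤ D * u := by
      have e1 : ‖j‖ ≤ 2 * d * u := by nlinarith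
      have : a2 * (d * u) ≥ 0 := by positivity
      nlinarith
    refine le_trans ?_ (mul_le_mul_right le_add_self _)
    rw [← ENNReal.ofReal_mul (by positivity)]
    apply ENNReal.ofReal_le_ofReal
    calc _ ≤ (D ^ (n : ℝ) * L ^ (-α1)) * v ^ (-α2) := by
          gcongr; exact main u α1 hu h1 (by linarith) hLu
      _ = _ := by ring

theorem stmt7 (n : ℕ) (hn : 1 ≤ n) (α1 α2 : ℝ) (h1 : 0 < α1) (h2 : 0 < α2)
    (hsum : α1 + α2 = n)
    (A1 A2 : Matrix (Fin n) (Fin n) ℤ) (hA1 : A1.det ≠ 0) (hA2 : A2.det ≠ 0)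
    (hA12 : (A1 - A2).det ≠ 0)
    (p : ℝ) (hp : 1 ≤ p) :
    ∃ C : ℝ, 0 < C ∧ ∀ b : (Fin n → ℤ) → ℝ, lpNorm p b ≠ ⊤ → ∀ lam : ℝ, 0 < lam →
      (∑' j : Fin n → ℤ,
          if ENNReal.ofReal lam < Ttil α1 α2 A1 A2 b j then (1 : ℝ≥0∞) else 0)
        ≤ (ENNReal.ofReal C * lpNorm p b / ENNReal.ofReal lam) ^ p := by
  obtain ⟨C, hC⟩ := wt_T n hn α1 α2 h1 h2 hsum A1 A2 hA1 hA2 hA12 p hp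
  have hp0 : 0 < p := by linarith
  refine ⟨((C : ℝ) + 1) ^ (1 / p), by positivity, fun b _ lam hlam => ?_⟩
  have hT : ∀ j, Ttil α1 α2 A1 A2 b j = ∑' i, (if j ≠ 0 ∧ i ≠ A1.mulVec j ∧ i ≠ A2.mulVec j then
      ENNReal.ofReal (1 / (eucZ (i - A1.mulVec j) ^ α1 * eucZ (i - A2.mulVec j) ^ α2)) else 0)
        * ENNReal.ofReal |b i| := by
    intro j
    unfold Ttil
    by_cases hj : j = 0
    · simp [hj]
    · simp only [hj, ne_eq, not_false_eq_true, if_true, true_and]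
      refine tsum_congr fun i => ?_
      split_ifs with hc
      · rw [← ENNReal.ofReal_mul' (abs_nonneg _)]
        congr 1; ring
      · simp
  have hl0 : ENNReal.ofReal lam ≠ 0 := by simpa using hlam
  have key := hC (fun i => ENNReal.ofReal |b i|) (ENNReal.ofReal lam) hl0 ENNReal.ofReal_ne_top
  simp_rw [hT]
  have e : (ENNReal.ofReal (((C : ℝ) + 1) ^ (1 / p)) * lpNorm p b / ENNReal.ofReal lam) ^ p
      = ENNReal.ofReal ((C : ℝ) + 1) * (∑' i, ENNReal.ofReal |b i| ^ p) / ENNReal.ofReal lam ^ p := by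
    unfold lpNorm
    rw [ENNReal.div_rpow_of_nonneg _ _ hp0.le, ENNReal.mul_rpow_of_nonneg _ _ hp0.le,
      ← ENNReal.rpow_mul, one_div, inv_mul_cancel₀ hp0.ne', ENNReal.rpow_one,
      ENNReal.ofReal_rpow_of_pos (by positivity), Real.rpow_inv_rpow (by positivity) hp0.ne']
  rw [e, ENNReal.le_div_iff_mul_le (Or.inl (by simp [hlam, hp0.le])) (Or.inl (by simp [hp0.le])), mul_comm]
  refine key.trans ?_
  gcongr
  rw [← ENNReal.ofReal_coe_nnreal]
  apply ENNReal.ofReal_le_ofReal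
  linarith
end
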